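/- arXiv:1801.06148 — 3 statements merged into one kernel-verified Lean document; each statement's English description precedes it below -/
import Mathlib

section
/- Let p ∈ [1, ∞), let ‖·‖ be a norm on ℝ^d, and let N ≥ c(d, ‖·‖) + 1 (or N ≥ d + 2 if ‖·‖ is induced by an inner product). Then Q_{N,p}(μ, ν) := sup_{x ∈ (ℝ^d)^N} |e_{N,p}(μ, x) − e_{N,p}(ν, x)| is finite for all Borel probability measures μ, ν on ℝ^d with finite p-th moments, Q_{N,p} is a metric on the set of such measures, and Q_{N,p} is topologically equivalent to the L^p-Wasserstein distance W_p: for any sequence (μ_n) and μ_∞ in this set, Q_{N,p}(μ_n, μ_∞) → 0 if and only if W_p(μ_n, μ_∞) → 0. -/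
open MeasureTheory Filter Topology
open scoped ENNReal NNReal

/-- The `L^p`-quantization error function at level `N`. -/
noncomputable def quantErr {E : Type*} [NormedAddCommGroup E] [MeasurableSpace E]
    (p : ℝ) (N : ℕ) (μ : Measure E) (x : Fin N → E) : ℝ :=
  (∫⁻ ξ, ⨅ i, (‖ξ - x i‖₊ : ℝ≥0∞) ^ p ∂μ).toReal ^ (1 / p)

/-- The `L^p`-Wasserstein distance. -/
noncomputable def wassersteinDist {E : Type*} [NormedAddCommGroup E] [MeasurableSpace E]
    (p : ℝ) (μ ν : Measure E) : ℝ :=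
  (⨅ π ∈ {π : Measure (E × E) | π.map Prod.fst = μ ∧ π.map Prod.snd = ν},
      ∫⁻ q, (‖q.1 - q.2‖₊ : ℝ≥0∞) ^ p ∂π).toReal ^ (1 / p)

/-- `μ` has a finite `p`-th moment. -/
def HasFiniteMoment {E : Type*} [NormedAddCommGroup E] [MeasurableSpace E]
    (p : ℝ) (μ : Measure E) : Prop :=
  ∫⁻ ξ, (‖ξ‖₊ : ℝ≥0∞) ^ p ∂μ ≠ ∞

/-- The minimal sphere covering number `c(d, ‖·‖)`. -/
noncomputable def coverNum (E : Type*) [NormedAddCommGroup E] : ℕ :=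
  sInf {k | ∃ a : Fin k → E, (∀ i, a i ∈ Metric.sphere (0 : E) 1) ∧
    Metric.sphere (0 : E) 1 ⊆ ⋃ i, Metric.closedBall (a i) 1}

/-- The quantization based quantity
`Q_{N,p}(μ, ν) = sup_x |e_{N,p}(μ, x) − e_{N,p}(ν, x)|`. -/
noncomputable def qDist {E : Type*} [NormedAddCommGroup E] [MeasurableSpace E]
    (p : ℝ) (N : ℕ) (μ ν : Measure E) : ℝ :=
  ⨆ x : Fin N → E, |quantErr p N μ x - quantErr p N ν x|


section Coupling

variable {E : Type*} [NormedAddCommGroup E] [NormedSpace ℝ E]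
    [FiniteDimensional ℝ E] [MeasurableSpace E] [BorelSpace E]

lemma aux_lint_conv_one (lam : Measure E) [lam.IsAddHaarMeasure] (K : E → ℝ≥0∞)
    (hK1 : ∫⁻ x, K x ∂lam = 1) (x : E) : ∫⁻ a, K (x - a) ∂lam = 1 := by
  rw [lintegral_sub_left_eq_self (fun z => K z) x, hK1]

/-- Smoothing of a measure. -/
noncomputable def smoothD (K : E → ℝ≥0∞) (μ : Measure E) (a : E) : ℝ≥0∞ :=
  ∫⁻ x, K (x - a) ∂μ

lemma smoothD_measurable (K : E → ℝ≥0∞) (hK : Measurable K) (μ : Measure E) [SFinite μ] :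
    Measurable (smoothD K μ) := by
  unfold smoothD
  exact Measurable.lintegral_prod_right' (f := fun q : E × E => K (q.2 - q.1)) (by fun_prop)

lemma smoothD_ae_lt_top (lam : Measure E) [lam.IsAddHaarMeasure] (K : E → ℝ≥0∞)
    (hK : Measurable K) (hK1 : ∫⁻ x, K x ∂lam = 1) (μ : Measure E) [IsProbabilityMeasure μ] :
    ∀ᵐ a ∂lam, smoothD K μ a < ∞ := by
  apply ae_lt_top (smoothD_measurable K hK μ)
  unfold smoothD
  rw [lintegral_lintegral_swap (by
    exact Measurable.aemeasurable (by fun_prop))]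
  simp [aux_lint_conv_one lam K hK1]

lemma inv_max_mul_le_one (f g : ℝ≥0∞) : (max f g)⁻¹ * g ≤ 1 :=
  le_trans (by gcongr; exact le_max_right _ _) (ENNReal.inv_mul_le_one (max f g))

lemma inv_max_mul_mul (f g : ℝ≥0∞) (hf : f < ∞) (hg : g < ∞) :
    (max f g)⁻¹ * g * f = min f g := by
  rcases le_total f g with h | h
  · rw [max_eq_right h, min_eq_left h]
    rcases eq_or_ne g 0 with h0 | h0
    · have : f = 0 := by simpa [h0] using h
      simp [h0, this]
    · rw [ENNReal.inv_mul_cancel h0 hg.ne, one_mul]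
  · rw [max_eq_left h, min_eq_right h]
    rcases eq_or_ne f 0 with h0 | h0
    · have : g = 0 := by simpa [h0] using h
      simp [h0, this]
    · rw [mul_right_comm, ENNReal.inv_mul_cancel h0 hf.ne, one_mul]

/-- One-sided estimate used for both marginals. -/
lemma aux_side (p : ℝ) (hp : 1 ≤ p) (lam : Measure E) [lam.IsAddHaarMeasure] (K : E → ℝ≥0∞)
    (hK : Measurable K) (hK1 : ∫⁻ x, K x ∂lam = 1) (r : ℝ≥0∞) (hr : r ≠ ∞)
    (hKr : ∀ x, K x ≠ 0 → ‖x‖ₑ ≤ r)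
    (μ ν : Measure E) [IsProbabilityMeasure μ] [IsProbabilityMeasure ν] :
    ∫⁻ a, min (smoothD K μ a) (smoothD K ν a) * (‖a‖ₑ - r) ^ p ∂lam ≤
      ∫⁻ x, (∫⁻ a, (max (smoothD K μ a) (smoothD K ν a))⁻¹ * smoothD K ν a * K (x - a) ∂lam)
        * ‖x‖ₑ ^ p ∂μ := by
  have mf := smoothD_measurable K hK μ
  have mg := smoothD_measurable K hK ν
  have h1 : ∀ x : E, (∫⁻ a, (max (smoothD K μ a) (smoothD K ν a))⁻¹ * smoothD K ν a * K (x - a) ∂lam)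
        * ‖x‖ₑ ^ p = ∫⁻ a, (max (smoothD K μ a) (smoothD K ν a))⁻¹ * smoothD K ν a * K (x - a) * ‖x‖ₑ ^ p ∂lam := by
    intro x
    rw [lintegral_mul_const]
    fun_prop
  simp_rw [h1]
  rw [lintegral_lintegral_swap (by
    exact Measurable.aemeasurable (by fun_prop))]
  apply lintegral_mono_ae
  filter_upwards [smoothD_ae_lt_top lam K hK hK1 μ, smoothD_ae_lt_top lam K hK hK1 ν] with a ha hb
  rw [← inv_max_mul_mul _ _ ha hb]
  conv_lhs => rw [mul_assoc]; rw [smoothD]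
  simp_rw [mul_assoc]
  rw [lintegral_const_mul _ (by fun_prop), lintegral_const_mul _ (by fun_prop),
    ← lintegral_mul_const _ (by fun_prop)]
  refine mul_le_mul' le_rfl (mul_le_mul' le_rfl (lintegral_mono fun x => ?_))
  by_cases hx : K (x - a) = 0
  · simp [hx]
  · gcongr
    rw [tsub_le_iff_right]
    calc ‖a‖ₑ = ‖x - (x - a)‖ₑ := by simp
      _ ≤ ‖x‖ₑ + ‖x - a‖ₑ := enorm_sub_le
      _ ≤ ‖x‖ₑ + r := by gcongr; exact hKr _ hx

lemma exists_coupling (p : ℝ) (hp : 1 ≤ p) (lam : Measure E) [lam.IsAddHaarMeasure] (K : E → ℝ≥0∞)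
    (hK : Measurable K) (hK1 : ∫⁻ x, K x ∂lam = 1) (r : ℝ≥0∞) (hr : r ≠ ∞)
    (hKr : ∀ x, K x ≠ 0 → ‖x‖ₑ ≤ r)
    (μ ν : Measure E) [IsProbabilityMeasure μ] [IsProbabilityMeasure ν]
    (hμ : ∫⁻ x, ‖x‖ₑ ^ p ∂μ ≠ ∞) (hν : ∫⁻ x, ‖x‖ₑ ^ p ∂ν ≠ ∞) :
    ∃ π : Measure (E × E), π.map Prod.fst = μ ∧ π.map Prod.snd = ν ∧
      ∫⁻ q, ‖q.1 - q.2‖ₑ ^ p ∂π ≤ (2 * r) ^ p + 2 ^ (p - 1) *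
        ((∫⁻ x, ‖x‖ₑ ^ p ∂μ - ∫⁻ a, min (smoothD K μ a) (smoothD K ν a) * (‖a‖ₑ - r) ^ p ∂lam) +
        (∫⁻ x, ‖x‖ₑ ^ p ∂ν - ∫⁻ a, min (smoothD K μ a) (smoothD K ν a) * (‖a‖ₑ - r) ^ p ∂lam)) := by
  have hp0 : 0 ≤ p := by linarith
  set f := smoothD K μ with hf
  set g := smoothD K ν with hg
  have mf : Measurable f := smoothD_measurable K hK μ
  have mg : Measurable g := smoothD_measurable K hK ν
  set H : E × E → ℝ≥0∞ := fun q => ∫⁻ a, (max (f a) (g a))⁻¹ * K (q.1 - a) * K (q.2 - a) ∂lam with hH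
  have mH : Measurable H := by
    exact Measurable.lintegral_prod_right'
      (f := fun s : (E × E) × E => (max (f s.2) (g s.2))⁻¹ * K (s.1.1 - s.2) * K (s.1.2 - s.2))
      (by fun_prop)
  set θ : E → ℝ≥0∞ := fun x => ∫⁻ a, (max (f a) (g a))⁻¹ * g a * K (x - a) ∂lam with hθ
  set θ' : E → ℝ≥0∞ := fun x => ∫⁻ a, (max (g a) (f a))⁻¹ * f a * K (x - a) ∂lam with hθ'
  have mθ : Measurable θ := Measurable.lintegral_prod_right'
      (f := fun s : E × E => (max (f s.2) (g s.2))⁻¹ * g s.2 * K (s.1 - s.2)) (by fun_prop)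
  have mθ' : Measurable θ' := Measurable.lintegral_prod_right'
      (f := fun s : E × E => (max (g s.2) (f s.2))⁻¹ * f s.2 * K (s.1 - s.2)) (by fun_prop)
  have θ1 : ∀ x, θ x ≤ 1 := by
    intro x
    rw [← aux_lint_conv_one lam K hK1 x]
    refine lintegral_mono fun a => ?_
    calc _ ≤ 1 * K (x - a) := by gcongr; exact inv_max_mul_le_one _ _
      _ = _ := one_mul _
  have θ'1 : ∀ x, θ' x ≤ 1 := by
    intro x
    rw [← aux_lint_conv_one lam K hK1 x]
    refine lintegral_mono fun a => ?_
    calc _ ≤ 1 * K (x - a) := by gcongr; exact inv_max_mul_le_one _ _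
      _ = _ := one_mul _
  have Hfst : ∀ x, ∫⁻ y, H (x, y) ∂ν = θ x := by
    intro x
    simp only [hH, hθ]
    rw [lintegral_lintegral_swap (by exact Measurable.aemeasurable (by fun_prop))]
    refine lintegral_congr fun a => ?_
    rw [lintegral_const_mul _ (by fun_prop)]
    simp only [hg, smoothD]
    ring
  have Hsnd : ∀ y, ∫⁻ x, H (x, y) ∂μ = θ' y := by
    intro y
    simp only [hH, hθ']
    rw [lintegral_lintegral_swap (by exact Measurable.aemeasurable (by fun_prop))]
    refine lintegral_congr fun a => ?_
    rw [lintegral_mul_const _ (by fun_prop), lintegral_const_mul _ (by fun_prop), max_comm]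
    simp only [hf, smoothD]
  set π1 : Measure (E × E) := (μ.prod ν).withDensity H with hπ1
  have π1fst : π1.map Prod.fst = μ.withDensity θ := by
    ext S hS
    rw [Measure.map_apply measurable_fst hS, hπ1, withDensity_apply _ (measurable_fst hS),
      withDensity_apply _ hS, ← lintegral_indicator (measurable_fst hS), ← lintegral_indicator hS,
      lintegral_prod _ ((mH.indicator (measurable_fst hS)).aemeasurable)]
    refine lintegral_congr fun x => ?_
    by_cases hx : x ∈ S
    · simp [Set.indicator, hx, Hfst]
    · simp [Set.indicator, hx]
  have π1snd : π1.map Prod.snd = ν.withDensity θ' := by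
    ext S hS
    rw [Measure.map_apply measurable_snd hS, hπ1, withDensity_apply _ (measurable_snd hS),
      withDensity_apply _ hS, ← lintegral_indicator (measurable_snd hS), ← lintegral_indicator hS,
      lintegral_prod_symm _ ((mH.indicator (measurable_snd hS)).aemeasurable)]
    refine lintegral_congr fun x => ?_
    by_cases hx : x ∈ S
    · simp [Set.indicator, hx, Hsnd]
    · simp [Set.indicator, hx]
  have addα : μ.withDensity θ + μ.withDensity (fun x => 1 - θ x) = μ := by
    rw [← withDensity_add_left mθ]
    have : (θ + fun x => 1 - θ x) = 1 := by
      funext x; simp [add_tsub_cancel_of_le (θ1 x)]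
    rw [this, withDensity_one]
  have addβ : ν.withDensity θ' + ν.withDensity (fun x => 1 - θ' x) = ν := by
    rw [← withDensity_add_left mθ']
    have : (θ' + fun x => 1 - θ' x) = 1 := by
      funext x; simp [add_tsub_cancel_of_le (θ'1 x)]
    rw [this, withDensity_one]
  set α := μ.withDensity (fun x => 1 - θ x) with hα
  set β := ν.withDensity (fun x => 1 - θ' x) with hβ
  have u1 : π1 Set.univ + α Set.univ = 1 := by
    have := congrArg (fun m : Measure E => m Set.univ) addα
    simp only [Measure.coe_add, Pi.add_apply, measure_univ] at this
    rwa [← π1fst, Measure.map_apply measurable_fst MeasurableSet.univ, Set.preimage_univ] at this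
  have u2 : π1 Set.univ + β Set.univ = 1 := by
    have := congrArg (fun m : Measure E => m Set.univ) addβ
    simp only [Measure.coe_add, Pi.add_apply, measure_univ] at this
    rwa [← π1snd, Measure.map_apply measurable_snd MeasurableSet.univ, Set.preimage_univ] at this
  have π1le : π1 Set.univ ≤ 1 := u1 ▸ le_self_add
  have αβ : α Set.univ = β Set.univ := by
    have h := u1.trans u2.symm
    exact (ENNReal.add_right_inj (π1le.trans_lt ENNReal.one_lt_top).ne).1 h
  have αfin : α Set.univ ≤ 1 := u1 ▸ le_add_self
  have αtop : α Set.univ ≠ ∞ := (αfin.trans_lt ENNReal.one_lt_top).ne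
  have : IsFiniteMeasure α := ⟨αtop.lt_top⟩
  have : IsFiniteMeasure β := ⟨αβ ▸ αtop.lt_top⟩
  have cancel : (α Set.univ)⁻¹ • (α Set.univ) • α = α := by
    by_cases h0 : α Set.univ = 0
    · rw [Measure.measure_univ_eq_zero.1 h0]; simp
    · rw [smul_smul, ENNReal.inv_mul_cancel h0 αtop, one_smul]
  have cancel' : (α Set.univ)⁻¹ • (α Set.univ) • β = β := by
    by_cases h0 : α Set.univ = 0
    · rw [Measure.measure_univ_eq_zero.1 (αβ ▸ h0 : β Set.univ = 0)]; simp
    · rw [smul_smul, ENNReal.inv_mul_cancel h0 αtop, one_smul]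
  refine ⟨π1 + (α Set.univ)⁻¹ • (α.prod β), ?_, ?_, ?_⟩
  · rw [Measure.map_add _ _ measurable_fst, Measure.map_smul, Measure.map_fst_prod, ← αβ, cancel,
      π1fst, addα]
  · rw [Measure.map_add _ _ measurable_snd, Measure.map_smul, Measure.map_snd_prod, cancel',
      π1snd, addβ]
  rw [lintegral_add_measure, lintegral_smul_measure]
  gcongr ?_ + ?_
  · rw [hπ1, lintegral_withDensity_eq_lintegral_mul _ mH (by fun_prop)]
    calc ∫⁻ q, (H * fun q : E × E => ‖q.1 - q.2‖ₑ ^ p) q ∂(μ.prod ν)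
        ≤ ∫⁻ q, H q * (2 * r) ^ p ∂(μ.prod ν) := by
          refine lintegral_mono fun q => ?_
          simp only [Pi.mul_apply]
          by_cases hq : ‖q.1 - q.2‖ₑ ≤ 2 * r
          · gcongr
          · have : H q = 0 := by
              simp only [hH]
              rw [lintegral_eq_zero_iff (by fun_prop)]
              refine Eventually.of_forall fun a => ?_
              by_contra hne
              simp only [Pi.zero_apply, mul_eq_zero, not_or] at hne
              apply hq
              calc ‖q.1 - q.2‖ₑ = ‖(q.1 - a) - (q.2 - a)‖ₑ := by congr 1; abel
                _ ≤ ‖q.1 - a‖ₑ + ‖q.2 - a‖ₑ := enorm_sub_le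
                _ ≤ r + r := add_le_add (hKr _ hne.1.2) (hKr _ hne.2)
                _ = 2 * r := (two_mul r).symm
            simp [this]
      _ = π1 Set.univ * (2 * r) ^ p := by
          rw [lintegral_mul_const _ mH, hπ1, withDensity_apply _ MeasurableSet.univ,
            Measure.restrict_univ]
      _ ≤ 1 * (2 * r) ^ p := by gcongr
      _ = _ := one_mul _
  · have sα : ∫⁻ x, ‖x‖ₑ ^ p ∂α ≤ ∫⁻ x, ‖x‖ₑ ^ p ∂μ -
        ∫⁻ a, min (f a) (g a) * (‖a‖ₑ - r) ^ p ∂lam := by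
      have h := aux_side p hp lam K hK hK1 r hr hKr μ ν
      have e : ∫⁻ x, ‖x‖ₑ ^ p ∂μ = ∫⁻ x, θ x * ‖x‖ₑ ^ p ∂μ + ∫⁻ x, ‖x‖ₑ ^ p ∂α := by
        conv_lhs => rw [← addα]
        rw [lintegral_add_measure, lintegral_withDensity_eq_lintegral_mul _ mθ (by fun_prop)]
        rfl
      refine ENNReal.le_sub_of_add_le_left (ne_top_of_le_ne_top hμ ?_) ?_
      · rw [e]; exact h.trans le_self_add
      · rw [e]; exact add_le_add h le_rfl
    have sβ : ∫⁻ x, ‖x‖ₑ ^ p ∂β ≤ ∫⁻ x, ‖x‖ₑ ^ p ∂ν -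
        ∫⁻ a, min (f a) (g a) * (‖a‖ₑ - r) ^ p ∂lam := by
      have h := aux_side p hp lam K hK hK1 r hr hKr ν μ
      simp_rw [min_comm (smoothD K ν _)] at h
      have e : ∫⁻ x, ‖x‖ₑ ^ p ∂ν = ∫⁻ x, θ' x * ‖x‖ₑ ^ p ∂ν + ∫⁻ x, ‖x‖ₑ ^ p ∂β := by
        conv_lhs => rw [← addβ]
        rw [lintegral_add_measure, lintegral_withDensity_eq_lintegral_mul _ mθ' (by fun_prop)]
        rfl
      refine ENNReal.le_sub_of_add_le_left (ne_top_of_le_ne_top hν ?_) ?_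
      · rw [e]; exact h.trans le_self_add
      · rw [e]; exact add_le_add h le_rfl
    have step : ∫⁻ q, ‖q.1 - q.2‖ₑ ^ p ∂(α.prod β) ≤
        α Set.univ * (2 ^ (p - 1) * (∫⁻ x, ‖x‖ₑ ^ p ∂α + ∫⁻ x, ‖x‖ₑ ^ p ∂β)) := by
      calc ∫⁻ q, ‖q.1 - q.2‖ₑ ^ p ∂(α.prod β)
          ≤ ∫⁻ q, 2 ^ (p - 1) * (‖q.1‖ₑ ^ p + ‖q.2‖ₑ ^ p) ∂(α.prod β) := by
            refine lintegral_mono fun q => ?_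
            refine le_trans ?_ (ENNReal.rpow_add_le_mul_rpow_add_rpow _ _ hp)
            gcongr
            exact enorm_sub_le
        _ = _ := by
            rw [lintegral_const_mul _ (by fun_prop), lintegral_prod _ (by fun_prop)]
            simp_rw [lintegral_add_left measurable_const, lintegral_const]
            rw [lintegral_add_right _ measurable_const, lintegral_mul_const _ (by fun_prop),
              lintegral_const, ← αβ]
            ring
    calc (α Set.univ)⁻¹ • ∫⁻ q, ‖q.1 - q.2‖ₑ ^ p ∂(α.prod β)
        ≤ (α Set.univ)⁻¹ * (α Set.univ * (2 ^ (p - 1) * (∫⁻ x, ‖x‖ₑ ^ p ∂α + ∫⁻ x, ‖x‖ₑ ^ p ∂β))) := by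
          rw [smul_eq_mul]; gcongr
      _ ≤ 1 * (2 ^ (p - 1) * (∫⁻ x, ‖x‖ₑ ^ p ∂α + ∫⁻ x, ‖x‖ₑ ^ p ∂β)) := by
          rw [← mul_assoc]; gcongr; exact ENNReal.inv_mul_le_one _
      _ ≤ _ := by rw [one_mul]; gcongr

end Coupling

section Conv

variable {E : Type*} [NormedAddCommGroup E] [NormedSpace ℝ E]
    [FiniteDimensional ℝ E] [MeasurableSpace E] [BorelSpace E]

/-- extended-real transport cost. -/
noncomputable def wCost (p : ℝ) (μ ν : Measure E) : ℝ≥0∞ :=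
  ⨅ π ∈ {π : Measure (E × E) | π.map Prod.fst = μ ∧ π.map Prod.snd = ν},
      ∫⁻ q, (‖q.1 - q.2‖₊ : ℝ≥0∞) ^ p ∂π

lemma wCost_le (p : ℝ) (μ ν : Measure E) (π : Measure (E × E)) (h1 : π.map Prod.fst = μ)
    (h2 : π.map Prod.snd = ν) : wCost p μ ν ≤ ∫⁻ q, ‖q.1 - q.2‖ₑ ^ p ∂π :=
  iInf₂_le π ⟨h1, h2⟩

lemma wCost_tendsto_zero (p : ℝ) (hp : 1 ≤ p) (lam : Measure E) [lam.IsAddHaarMeasure]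
    (μ : ℕ → Measure E) (ν : Measure E) [∀ n, IsProbabilityMeasure (μ n)] [IsProbabilityMeasure ν]
    (hμ : ∀ n, ∫⁻ x, ‖x‖ₑ ^ p ∂(μ n) ≠ ∞) (hν : ∫⁻ x, ‖x‖ₑ ^ p ∂ν ≠ ∞)
    (hM : Tendsto (fun n => ∫⁻ x, ‖x‖ₑ ^ p ∂(μ n)) atTop (𝓝 (∫⁻ x, ‖x‖ₑ ^ p ∂ν)))
    (hK : ∀ r : ℝ≥0, 0 < r → ∃ K : E → ℝ≥0∞, Measurable K ∧ ∫⁻ x, K x ∂lam = 1 ∧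
      (∀ x, K x ≠ 0 → ‖x‖ₑ ≤ r) ∧
      ∀ a, Tendsto (fun n => smoothD K (μ n) a) atTop (𝓝 (smoothD K ν a))) :
    Tendsto (fun n => wCost p (μ n) ν) atTop (𝓝 0) := by
  have hp0 : 0 < p := by linarith
  have htwo : (2 : ℝ≥0∞) ^ (p - 1) ≠ ∞ := by
    apply ENNReal.rpow_ne_top_of_nonneg (by linarith); simp
  rw [ENNReal.tendsto_nhds_zero]
  intro ε hε
  set M := ∫⁻ x, ‖x‖ₑ ^ p ∂ν with hMdef
  -- the limit bound
  have hlim : Tendsto (fun r : ℝ≥0 => ∫⁻ x, (‖x‖ₑ - 2 * (r : ℝ≥0∞)) ^ p ∂ν) (𝓝 0) (𝓝 M) := by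
    refine tendsto_lintegral_filter_of_dominated_convergence (fun x => ‖x‖ₑ ^ p) ?_ ?_ hν ?_
    · exact Eventually.of_forall fun r => by fun_prop
    · refine Eventually.of_forall fun r => Eventually.of_forall fun x => ?_
      gcongr
      exact tsub_le_self
    · refine Eventually.of_forall fun x => ?_
      have h1 : Tendsto (fun r : ℝ≥0 => 2 * (r : ℝ≥0∞)) (𝓝 0) (𝓝 0) := by
        have : Tendsto (fun r : ℝ≥0 => ((2 * r : ℝ≥0) : ℝ≥0∞)) (𝓝 0) (𝓝 ((2 * 0 : ℝ≥0) : ℝ≥0∞)) :=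
          ENNReal.tendsto_coe.2 (Tendsto.const_mul 2 tendsto_id)
        simpa using this
      have h2 : Tendsto (fun r : ℝ≥0 => ‖x‖ₑ - 2 * (r : ℝ≥0∞)) (𝓝 0) (𝓝 (‖x‖ₑ - 0)) :=
        ENNReal.Tendsto.sub tendsto_const_nhds h1 (Or.inr (by simp))
      rw [tsub_zero] at h2
      exact h2.ennrpow_const p
  have hB : Tendsto (fun r : ℝ≥0 => (2 * (r : ℝ≥0∞)) ^ p + 2 ^ (p - 1) *
      ((M - ∫⁻ x, (‖x‖ₑ - 2 * (r : ℝ≥0∞)) ^ p ∂ν) + (M - ∫⁻ x, (‖x‖ₑ - 2 * (r : ℝ≥0∞)) ^ p ∂ν)))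
      (𝓝 0) (𝓝 0) := by
    have h1 : Tendsto (fun r : ℝ≥0 => 2 * (r : ℝ≥0∞)) (𝓝 0) (𝓝 0) := by
      have : Tendsto (fun r : ℝ≥0 => ((2 * r : ℝ≥0) : ℝ≥0∞)) (𝓝 0) (𝓝 ((2 * 0 : ℝ≥0) : ℝ≥0∞)) :=
        ENNReal.tendsto_coe.2 (Tendsto.const_mul 2 tendsto_id)
      simpa using this
    have h2 := h1.ennrpow_const p
    have h3 : Tendsto (fun r : ℝ≥0 => M - ∫⁻ x, (‖x‖ₑ - 2 * (r : ℝ≥0∞)) ^ p ∂ν) (𝓝 0) (𝓝 (M - M)) :=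
      ENNReal.Tendsto.sub tendsto_const_nhds hlim (Or.inr hν)
    have h4 := h2.add (ENNReal.Tendsto.const_mul (h3.add h3) (Or.inr htwo))
    simpa [ENNReal.zero_rpow_of_pos hp0] using h4
  have hB' : ∀ᶠ r : ℝ≥0 in 𝓝[>] 0, (2 * (r : ℝ≥0∞)) ^ p + 2 ^ (p - 1) *
      ((M - ∫⁻ x, (‖x‖ₑ - 2 * (r : ℝ≥0∞)) ^ p ∂ν) + (M - ∫⁻ x, (‖x‖ₑ - 2 * (r : ℝ≥0∞)) ^ p ∂ν)) < ε :=
    (hB.mono_left nhdsWithin_le_nhds).eventually (gt_mem_nhds hε)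
  obtain ⟨r, hr, hr0⟩ := (hB'.and self_mem_nhdsWithin).exists
  obtain ⟨K, mK, K1, Kr, Kt⟩ := hK r hr0
  have mg := smoothD_measurable K mK ν
  set w : E → ℝ≥0∞ := fun a => (‖a‖ₑ - r) ^ p with hw
  have mw : Measurable w := by fun_prop
  have hgw : ∫⁻ a, smoothD K ν a * w a ∂lam = ∫⁻ y, ∫⁻ a, K (y - a) * w a ∂lam ∂ν := by
    rw [← lintegral_lintegral_swap (by exact Measurable.aemeasurable (by fun_prop))]
    refine lintegral_congr fun a => ?_
    rw [lintegral_mul_const _ (by fun_prop)]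
    rfl
  have hup : ∫⁻ a, smoothD K ν a * w a ∂lam ≤ M := by
    rw [hgw, hMdef]
    refine lintegral_mono fun y => ?_
    calc ∫⁻ a, K (y - a) * w a ∂lam ≤ ∫⁻ a, K (y - a) * ‖y‖ₑ ^ p ∂lam := by
          refine lintegral_mono fun a => ?_
          by_cases hx : K (y - a) = 0
          · simp [hx]
          · simp only [hw]
            gcongr
            rw [tsub_le_iff_right]
            calc ‖a‖ₑ = ‖y - (y - a)‖ₑ := by simp
              _ ≤ ‖y‖ₑ + ‖y - a‖ₑ := enorm_sub_le
              _ ≤ ‖y‖ₑ + r := by gcongr; exact Kr _ hx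
      _ = ‖y‖ₑ ^ p := by
          rw [lintegral_mul_const _ (by fun_prop), aux_lint_conv_one lam K K1, one_mul]
  have hlow : ∫⁻ x, (‖x‖ₑ - 2 * (r : ℝ≥0∞)) ^ p ∂ν ≤ ∫⁻ a, smoothD K ν a * w a ∂lam := by
    rw [hgw]
    refine lintegral_mono fun y => ?_
    calc (‖y‖ₑ - 2 * (r : ℝ≥0∞)) ^ p = ∫⁻ a, K (y - a) * (‖y‖ₑ - 2 * (r : ℝ≥0∞)) ^ p ∂lam := by
          rw [lintegral_mul_const _ (by fun_prop), aux_lint_conv_one lam K K1, one_mul]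
      _ ≤ _ := by
          refine lintegral_mono fun a => ?_
          by_cases hx : K (y - a) = 0
          · simp [hx]
          · simp only [hw]
            rw [two_mul, ← tsub_tsub]
            gcongr
            rw [tsub_le_iff_right]
            calc ‖y‖ₑ = ‖a + (y - a)‖ₑ := by simp
              _ ≤ ‖a‖ₑ + ‖y - a‖ₑ := enorm_add_le _ _
              _ ≤ ‖a‖ₑ + r := by gcongr; exact Kr _ hx
  have hL : Tendsto (fun n => ∫⁻ a, min (smoothD K (μ n) a) (smoothD K ν a) * w a ∂lam) atTop
      (𝓝 (∫⁻ a, smoothD K ν a * w a ∂lam)) := by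
    refine tendsto_lintegral_of_dominated_convergence (fun a => smoothD K ν a * w a) ?_ ?_
      (ne_top_of_le_ne_top hν hup) ?_
    · intro n
      have := smoothD_measurable K mK (μ n)
      fun_prop
    · refine fun n => Eventually.of_forall fun a => ?_
      dsimp only
      gcongr
      exact min_le_right _ _
    · filter_upwards [smoothD_ae_lt_top lam K mK K1 ν] with a ha
      have h1 := (Kt a).min (tendsto_const_nhds (x := smoothD K ν a))
      rw [min_self] at h1
      refine ENNReal.Tendsto.mul_const h1 (Or.inr ?_)
      apply ENNReal.rpow_ne_top_of_nonneg hp0.le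
      exact ne_top_of_le_ne_top (enorm_ne_top (x := a)) tsub_le_self
  set L := ∫⁻ a, smoothD K ν a * w a ∂lam with hLdef
  have hLtop : L ≠ ∞ := ne_top_of_le_ne_top hν hup
  have hT : Tendsto (fun n => (2 * (r : ℝ≥0∞)) ^ p + 2 ^ (p - 1) *
      ((∫⁻ x, ‖x‖ₑ ^ p ∂(μ n) - ∫⁻ a, min (smoothD K (μ n) a) (smoothD K ν a) * w a ∂lam) +
       (M - ∫⁻ a, min (smoothD K (μ n) a) (smoothD K ν a) * w a ∂lam))) atTop
      (𝓝 ((2 * (r : ℝ≥0∞)) ^ p + 2 ^ (p - 1) * ((M - L) + (M - L)))) := by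
    refine tendsto_const_nhds.add (ENNReal.Tendsto.const_mul ?_ (Or.inr htwo))
    exact (ENNReal.Tendsto.sub hM hL (Or.inr hLtop)).add
      (ENNReal.Tendsto.sub tendsto_const_nhds hL (Or.inr hLtop))
  have hlt : (2 * (r : ℝ≥0∞)) ^ p + 2 ^ (p - 1) * ((M - L) + (M - L)) < ε := by
    refine lt_of_le_of_lt ?_ hr
    gcongr
  filter_upwards [hT.eventually (gt_mem_nhds hlt)] with n hn
  obtain ⟨π, h1, h2, h3⟩ := exists_coupling p hp lam K mK K1 r ENNReal.coe_ne_top Kr (μ n) ν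
    (hμ n) hν
  exact (wCost_le p _ _ π h1 h2).trans (h3.trans hn.le)

end Conv

section Kernel

variable {E : Type*} [NormedAddCommGroup E] [NormedSpace ℝ E]
    [FiniteDimensional ℝ E] [MeasurableSpace E] [BorelSpace E]

/-- the integral inside the quantization error -/
noncomputable def quantE (p : ℝ) (N : ℕ) (μ : Measure E) (x : Fin N → E) : ℝ≥0∞ :=
  ∫⁻ ξ, ⨅ i, ‖ξ - x i‖ₑ ^ p ∂μ

lemma quantE_ne_top (p : ℝ) (hp : 1 ≤ p) (N : ℕ) (i : Fin N) (μ : Measure E)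
    [IsProbabilityMeasure μ] (hμ : ∫⁻ x, ‖x‖ₑ ^ p ∂μ ≠ ∞) (x : Fin N → E) :
    quantE p N μ x ≠ ∞ := by
  have hp0 : 0 ≤ p := by linarith
  have htwo : (2 : ℝ≥0∞) ^ (p - 1) ≠ ∞ := by
    apply ENNReal.rpow_ne_top_of_nonneg (by linarith); simp
  have h : quantE p N μ x ≤ ∫⁻ ξ, 2 ^ (p - 1) * (‖ξ‖ₑ ^ p + ‖x i‖ₑ ^ p) ∂μ := by
    refine lintegral_mono fun ξ => (iInf_le _ i).trans ?_
    refine le_trans ?_ (ENNReal.rpow_add_le_mul_rpow_add_rpow _ _ hp)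
    gcongr
    exact enorm_sub_le
  refine ne_top_of_le_ne_top ?_ h
  rw [lintegral_const_mul _ (by fun_prop), lintegral_add_right _ measurable_const, lintegral_const,
    measure_univ, mul_one]
  exact ENNReal.mul_ne_top htwo (ENNReal.add_ne_top.2 ⟨hμ,
    ENNReal.rpow_ne_top_of_nonneg hp0 enorm_ne_top⟩)

lemma continuous_infpow (p : ℝ) (N : ℕ) (x : Fin N → E) :
    Continuous (fun ξ => ⨅ i, ‖ξ - x i‖ₑ ^ p) := by
  simp_rw [← Finset.inf_univ_eq_iInf]
  refine Continuous.finset_inf_apply fun i _ => ?_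
  exact ENNReal.continuous_rpow_const.comp (by fun_prop)

/-- good configuration of points -/
def GoodPts (E : Type*) [NormedAddCommGroup E] (N : ℕ) : Prop :=
  ∃ (b : Fin N → E) (i0 j : Fin N), j ≠ i0 ∧ b i0 = b j ∧ (∀ i, b i ≠ 0) ∧
    ∀ ξ : E, 1 ≤ ‖ξ‖ → ∃ i, ‖ξ - b i‖ ≤ ‖ξ‖

lemma exists_kernel (p : ℝ) (hp : 1 ≤ p) (N : ℕ) (hG : GoodPts E N)
    (lam : Measure E) [lam.IsAddHaarMeasure]
    (μ : ℕ → Measure E) (ν : Measure E) [∀ n, IsProbabilityMeasure (μ n)] [IsProbabilityMeasure ν]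
    (hμ : ∀ n, ∫⁻ x, ‖x‖ₑ ^ p ∂(μ n) ≠ ∞) (hν : ∫⁻ x, ‖x‖ₑ ^ p ∂ν ≠ ∞)
    (hQ : ∀ x, Tendsto (fun n => quantE p N (μ n) x) atTop (𝓝 (quantE p N ν x)))
    (r : ℝ≥0) (hr : 0 < r) : ∃ K : E → ℝ≥0∞, Measurable K ∧ ∫⁻ x, K x ∂lam = 1 ∧
      (∀ x, K x ≠ 0 → ‖x‖ₑ ≤ r) ∧
      ∀ a, Tendsto (fun n => smoothD K (μ n) a) atTop (𝓝 (smoothD K ν a)) := by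
  have hp0 : 0 < p := by linarith
  obtain ⟨b, i0, j, hj, hbj, hb0, hcov⟩ := hG
  set x : Fin N → E := fun i => (r : ℝ) • b i with hx
  set x' : Fin N → E := Function.update x i0 0 with hx'
  set A : E → ℝ≥0∞ := fun η => ⨅ i, ‖η - x i‖ₑ ^ p with hA
  set B : E → ℝ≥0∞ := fun η => ⨅ i, ‖η - x' i‖ₑ ^ p with hB
  have cA : Continuous A := continuous_infpow p N x
  have cB : Continuous B := continuous_infpow p N x'
  have hBA : ∀ η, B η ≤ A η := by
    intro η
    refine le_iInf fun i => ?_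
    by_cases hi : i = i0
    · refine (iInf_le _ j).trans (le_of_eq ?_)
      simp [hx', hj, hx, hi, hbj]
    · refine (iInf_le _ i).trans (le_of_eq ?_)
      simp [hx', hi]
  have hAB : ∀ η, (r : ℝ≥0∞) ≤ ‖η‖ₑ → A η ≤ B η := by
    intro η hη
    refine le_iInf fun i => ?_
    by_cases hi : i = i0
    · have hη' : (r : ℝ) ≤ ‖η‖ := by
        rw [enorm_eq_nnnorm, ENNReal.coe_le_coe] at hη
        exact_mod_cast hη
      have hr' : (0 : ℝ) < r := hr
      obtain ⟨k, hk⟩ := hcov ((r : ℝ)⁻¹ • η) (by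
        rw [norm_smul, norm_inv, Real.norm_of_nonneg hr'.le, ← div_eq_inv_mul, le_div_iff₀ hr']
        simpa using hη')
      refine (iInf_le _ k).trans ?_
      simp only [hx', hi, Function.update_self, sub_zero]
      gcongr
      have : η - x k = (r : ℝ) • ((r : ℝ)⁻¹ • η - b k) := by
        rw [smul_sub, smul_inv_smul₀ hr'.ne']
      rw [this, enorm_le_iff_norm_le, norm_smul]
      calc ‖(r : ℝ)‖ * ‖(r : ℝ)⁻¹ • η - b k‖ ≤ ‖(r : ℝ)‖ * ‖(r : ℝ)⁻¹ • η‖ := by gcongr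
        _ = ‖η‖ := by rw [← norm_smul, smul_inv_smul₀ hr'.ne']
    · refine (iInf_le _ i).trans (le_of_eq ?_)
      simp [hx', hi]
  have hB0 : B 0 = 0 := by
    refine le_antisymm ((iInf_le _ i0).trans (le_of_eq ?_)) bot_le
    simp [hx', ENNReal.zero_rpow_of_pos hp0]
  have hA0 : 0 < A 0 := by
    simp only [hA]
    have : Nonempty (Fin N) := ⟨i0⟩
    obtain ⟨k, hk⟩ := exists_eq_ciInf_of_finite (f := fun i => ‖(0 : E) - x i‖ₑ ^ p)
    rw [← hk]
    apply ENNReal.rpow_pos _ (by simp)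
    simp [hx, hb0, hr.ne']
  set K0 : E → ℝ≥0∞ := fun η => A η - B η with hK0
  have mK0 : Measurable K0 := cA.measurable.sub cB.measurable
  have supK0 : ∀ η, K0 η ≠ 0 → ‖η‖ₑ ≤ r := by
    intro η h
    by_contra hlt
    exact h (tsub_eq_zero_of_le (hAB η (not_le.1 hlt).le))
  set C := ∫⁻ η, K0 η ∂lam with hC
  have hCpos : C ≠ 0 := by
    apply ne_of_gt
    rw [hC, lintegral_pos_iff_support mK0]
    have : Function.support K0 = {η | B η < A η} := by
      ext η; simp [hK0, tsub_eq_zero_iff_le]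
    rw [this]
    exact (isOpen_lt cB cA).measure_pos lam ⟨0, by simpa [hB0] using hA0⟩
  have hCtop : C ≠ ∞ := by
    have h : C ≤ ∫⁻ η in Metric.closedBall (0 : E) r, ((r : ℝ≥0∞) + ‖x i0‖ₑ) ^ p ∂lam := by
      rw [hC, ← lintegral_indicator Metric.isClosed_closedBall.measurableSet]
      refine lintegral_mono fun η => ?_
      by_cases h0 : K0 η = 0
      · rw [h0]; exact bot_le
      · have h1 := supK0 η h0
        have hm : η ∈ Metric.closedBall (0 : E) r := by
          rw [mem_closedBall_zero_iff]
          rw [enorm_eq_nnnorm, ENNReal.coe_le_coe] at h1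
          exact_mod_cast h1
        rw [Set.indicator_of_mem hm]
        refine tsub_le_self.trans ((iInf_le _ i0).trans ?_)
        gcongr
        exact enorm_sub_le.trans (by gcongr)
    refine ne_top_of_le_ne_top ?_ h
    rw [lintegral_const, Measure.restrict_apply_univ]
    refine ENNReal.mul_ne_top (ENNReal.rpow_ne_top_of_nonneg hp0.le (by simp)) ?_
    exact (isCompact_closedBall (0 : E) r).measure_ne_top
  refine ⟨fun η => C⁻¹ * K0 η, by fun_prop, ?_, ?_, ?_⟩
  · rw [lintegral_const_mul _ mK0, ENNReal.inv_mul_cancel hCpos hCtop]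
  · intro η h
    exact supK0 η (right_ne_zero_of_mul h)
  · intro a
    have key : ∀ (m : Measure E) [IsProbabilityMeasure m], ∫⁻ y, ‖y‖ₑ ^ p ∂m ≠ ∞ →
        smoothD (fun η => C⁻¹ * K0 η) m a =
        C⁻¹ * (quantE p N m (fun i => a + x i) - quantE p N m (fun i => a + x' i)) := by
      intro m _ hm
      unfold smoothD
      rw [lintegral_const_mul _ (by fun_prop)]
      congr 1
      have e1 : ∀ ξ, A (ξ - a) = ⨅ i, ‖ξ - (a + x i)‖ₑ ^ p := by
        intro ξ; simp only [hA, sub_sub]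
      have e2 : ∀ ξ, B (ξ - a) = ⨅ i, ‖ξ - (a + x' i)‖ₑ ^ p := by
        intro ξ; simp only [hB, sub_sub]
      have hfin := quantE_ne_top p hp N i0 m hm (fun i => a + x' i)
      unfold quantE at hfin ⊢
      simp_rw [← e1, ← e2] at hfin ⊢
      simp only [hK0]
      rw [lintegral_sub]
      · exact cB.measurable.comp (by fun_prop)
      · exact hfin
      · exact Eventually.of_forall fun ξ => hBA _
    rw [key ν hν]
    simp_rw [fun n => key (μ n) (hμ n)]
    refine ENNReal.Tendsto.const_mul ?_ (Or.inr (by simp [hCpos]))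
    exact ENNReal.Tendsto.sub (hQ _) (hQ _) (Or.inl (quantE_ne_top p hp N i0 ν hν _))

lemma exists_kernel_triv [Subsingleton E]
    (lam : Measure E) [lam.IsAddHaarMeasure]
    (μ : ℕ → Measure E) (ν : Measure E) [∀ n, IsProbabilityMeasure (μ n)] [IsProbabilityMeasure ν]
    (r : ℝ≥0) : ∃ K : E → ℝ≥0∞, Measurable K ∧ ∫⁻ x, K x ∂lam = 1 ∧
      (∀ x, K x ≠ 0 → ‖x‖ₑ ≤ r) ∧
      ∀ a, Tendsto (fun n => smoothD K (μ n) a) atTop (𝓝 (smoothD K ν a)) := by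
  refine ⟨fun _ => (lam Set.univ)⁻¹, measurable_const, ?_, ?_, ?_⟩
  · rw [lintegral_const, ENNReal.inv_mul_cancel]
    · exact isOpen_univ.measure_ne_zero lam Set.univ_nonempty
    · exact (Set.toFinite (Set.univ : Set E)).isCompact.measure_ne_top
  · intro x _
    rw [Subsingleton.elim x 0]; simp
  · intro a
    simp [smoothD]

end Kernel

section Good

lemma goodPts_of {E : Type*} [NormedAddCommGroup E] [NormedSpace ℝ E] (N k : ℕ) (hk : 0 < k)
    (hkN : k + 1 ≤ N) (b : Fin k → E) (hb : ∀ i, b i ≠ 0) (R : ℝ) (hR : 0 < R)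
    (hcov : ∀ ξ : E, R ≤ ‖ξ‖ → ∃ i, ‖ξ - b i‖ ≤ ‖ξ‖) : GoodPts E N := by
  refine ⟨fun i => R⁻¹ • (if h : i.1 < k then b ⟨i.1, h⟩ else b ⟨0, hk⟩), ⟨k, by omega⟩,
    ⟨0, by omega⟩, ?_, ?_, ?_, ?_⟩
  · simp [Fin.ext_iff]; omega
  · simp [hk]
  · intro i
    refine smul_ne_zero (inv_ne_zero hR.ne') ?_
    split_ifs
    · exact hb _
    · exact hb _
  · intro ξ hξ
    obtain ⟨i, hi⟩ := hcov (R • ξ) (by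
      rw [norm_smul, Real.norm_of_nonneg hR.le]; nlinarith)
    refine ⟨⟨i.1, by omega⟩, ?_⟩
    simp only [i.2, dite_true]
    have : ξ - R⁻¹ • b i = R⁻¹ • (R • ξ - b i) := by
      rw [smul_sub, inv_smul_smul₀ hR.ne']
    rw [Fin.eta, this, norm_smul]
    calc ‖R⁻¹‖ * ‖R • ξ - b i‖ ≤ ‖R⁻¹‖ * ‖R • ξ‖ := by gcongr
      _ = ‖ξ‖ := by rw [← norm_smul, inv_smul_smul₀ hR.ne']

lemma goodPts_cover {E : Type*} [NormedAddCommGroup E] [NormedSpace ℝ E]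
    [FiniteDimensional ℝ E] [Nontrivial E] (N : ℕ) (hN : coverNum E + 1 ≤ N) : GoodPts E N := by
  have hne : {k | ∃ a : Fin k → E, (∀ i, a i ∈ Metric.sphere (0 : E) 1) ∧
    Metric.sphere (0 : E) 1 ⊆ ⋃ i, Metric.closedBall (a i) 1}.Nonempty := by
    obtain ⟨t, hts, htf, htc⟩ := (isCompact_sphere (0 : E) 1).finite_cover_balls one_pos
    refine ⟨htf.toFinset.card, fun i => (htf.toFinset.equivFin.symm i).1, ?_, ?_⟩
    · intro i
      exact hts (htf.mem_toFinset.1 (htf.toFinset.equivFin.symm i).2)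
    · intro y hy
      obtain ⟨x, hx, hyx⟩ := Set.mem_iUnion₂.1 (htc hy)
      refine Set.mem_iUnion.2 ⟨htf.toFinset.equivFin ⟨x, htf.mem_toFinset.2 hx⟩, ?_⟩
      simp only [Equiv.symm_apply_apply]
      exact Metric.ball_subset_closedBall hyx
  obtain ⟨a, ha, hcov⟩ := Nat.sInf_mem hne
  change Fin (coverNum E) → E at a
  have hpos : 0 < coverNum E := by
    obtain ⟨u, hu⟩ := NormedSpace.sphere_nonempty (x := (0 : E)) (r := 1) |>.2 zero_le_one
    obtain ⟨i, -⟩ := Set.mem_iUnion.1 (hcov hu)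
    exact i.pos
  refine goodPts_of N (coverNum E) hpos hN a ?_ 1 one_pos ?_
  · intro i h
    have := ha i
    simp [h] at this
  · intro ξ hξ
    have h0 : 0 < ‖ξ‖ := by linarith
    have hu : ‖ξ‖⁻¹ • ξ ∈ Metric.sphere (0 : E) 1 := by
      rw [mem_sphere_zero_iff_norm, norm_smul, norm_inv, norm_norm, inv_mul_cancel₀ h0.ne']
    obtain ⟨i, hi⟩ := Set.mem_iUnion.1 (hcov hu)
    rw [Metric.mem_closedBall, dist_eq_norm] at hi
    refine ⟨i, ?_⟩
    have e : ξ - a i = (‖ξ‖ - 1) • (‖ξ‖⁻¹ • ξ) + (‖ξ‖⁻¹ • ξ - a i) := by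
      rw [sub_smul, smul_inv_smul₀ h0.ne', one_smul]; abel
    rw [mem_sphere_zero_iff_norm] at hu
    calc ‖ξ - a i‖ ≤ ‖(‖ξ‖ - 1) • (‖ξ‖⁻¹ • ξ)‖ + ‖‖ξ‖⁻¹ • ξ - a i‖ := by
          rw [e]; exact norm_add_le _ _
      _ ≤ (‖ξ‖ - 1) + 1 := by
          rw [norm_smul, hu, Real.norm_of_nonneg (by linarith), mul_one]; gcongr
      _ = ‖ξ‖ := by ring

lemma goodPts_inner {E : Type*} [NormedAddCommGroup E] [InnerProductSpace ℝ E]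
    [FiniteDimensional ℝ E] [Nontrivial E] (N : ℕ) (hN : Module.finrank ℝ E + 2 ≤ N) :
    GoodPts E N := by
  set d := Module.finrank ℝ E with hd
  have hdpos : 0 < d := Module.finrank_pos
  have hd1 : (1 : ℝ) ≤ d := by exact_mod_cast hdpos
  set e := stdOrthonormalBasis ℝ E with he
  set s : E := -∑ i, e i with hs
  have hsi : ∀ ξ : E, inner ℝ ξ s = - ∑ i, inner ℝ ξ (e i) := by
    intro ξ; rw [hs, inner_neg_right, inner_sum]
  have key : ∀ ξ b : E, ‖b‖ ^ 2 ≤ 2 * inner ℝ ξ b → ‖ξ - b‖ ≤ ‖ξ‖ := by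
    intro ξ b h
    refine le_of_sq_le_sq ?_ (norm_nonneg _)
    rw [norm_sub_sq_real]; linarith
  set B : ℝ := 1 + ‖s‖ ^ 2 with hB
  have hB1 : 1 ≤ B := by rw [hB]; nlinarith [sq_nonneg ‖s‖]
  refine goodPts_of N (d + 1) (by omega) hN (Fin.cons s fun i => e i) ?_ (d * (d * B) + 1)
    (by positivity) ?_
  · intro i
    refine Fin.cases ?_ (fun i => ?_) i
    · simp only [Fin.cons_zero]
      intro h0
      have h1 := hsi (e ⟨0, hdpos⟩)
      rw [h0, inner_zero_right] at h1
      simp [e.inner_eq_ite] at h1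
    · simp only [Fin.cons_succ]
      exact e.orthonormal.ne_zero i
  · intro ξ hξ
    by_contra hcon
    push Not at hcon
    have c0 : 2 * inner ℝ ξ s < B := by
      by_contra hh
      have := hcon 0
      simp only [Fin.cons_zero] at this
      exact absurd (key ξ s (by rw [hB] at hh; linarith)) (not_le.2 this)
    have ci : ∀ i, 2 * inner ℝ ξ (e i) < B := by
      intro i
      by_contra hh
      have := hcon i.succ
      simp only [Fin.cons_succ] at this
      refine absurd (key ξ (e i) ?_) (not_le.2 this)
      rw [e.orthonormal.1 i]; linarith
    have hup : ∀ i, inner ℝ ξ (e i) ≤ B := fun i => by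
      have := ci i
      linarith
    have hsum : -B ≤ ∑ i, inner ℝ ξ (e i) := by
      rw [hsi] at c0; linarith
    have habs : ∀ i, |inner ℝ ξ (e i)| ≤ d * B := by
      intro i
      rw [abs_le]
      constructor
      · have h1 : ∑ j ∈ Finset.univ.erase i, inner ℝ ξ (e j) ≤ ∑ j ∈ Finset.univ.erase i, B :=
          Finset.sum_le_sum fun j _ => hup j
        have h2 := Finset.add_sum_erase Finset.univ (fun j => inner ℝ ξ (e j)) (Finset.mem_univ i)
        rw [Finset.sum_const, Finset.card_erase_of_mem (Finset.mem_univ i), Finset.card_univ,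
          Fintype.card_fin, nsmul_eq_mul] at h1
        change _ ≤ ((d - 1 : ℕ) : ℝ) * B at h1
        rw [Nat.cast_sub hdpos] at h1
        simp only [Nat.cast_one] at h1
        linarith
      · refine (hup i).trans ?_
        nlinarith
    have hn : ‖ξ‖ ≤ d * (d * B) := by
      calc ‖ξ‖ = ‖∑ i, inner ℝ (e i) ξ • e i‖ := by rw [e.sum_repr' ξ]
        _ ≤ ∑ i, ‖inner ℝ (e i) ξ • e i‖ := norm_sum_le _ _
        _ ≤ ∑ i : Fin d, (d * B) := by
            refine Finset.sum_le_sum fun i _ => ?_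
            rw [norm_smul, e.orthonormal.1 i, mul_one, real_inner_comm]
            exact habs i
        _ = d * (d * B) := by simp
    linarith

lemma goodPts_hyp {E : Type*} [NormedAddCommGroup E] [NormedSpace ℝ E]
    [FiniteDimensional ℝ E] [Nontrivial E] (N : ℕ) (hN : coverNum E + 1 ≤ N ∨
      (Nonempty (InnerProductSpace ℝ E) ∧ Module.finrank ℝ E + 2 ≤ N)) : GoodPts E N := by
  rcases hN with h | ⟨⟨I⟩, h⟩
  · exact goodPts_cover N h
  · have hpar : ∀ x y : E, ‖x + y‖ * ‖x + y‖ + ‖x - y‖ * ‖x - y‖ = 2 * (‖x‖ * ‖x‖ + ‖y‖ * ‖y‖) :=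
      fun x y => by simpa only [sq] using @parallelogram_law_with_norm ℝ E _ _ I x y
    let _ := InnerProductSpace.ofNorm ℝ hpar
    exact goodPts_inner N h

end Good

section Final

variable {E : Type*} [NormedAddCommGroup E] [NormedSpace ℝ E]
    [FiniteDimensional ℝ E] [MeasurableSpace E] [BorelSpace E]

lemma infpow_eq (p : ℝ) (hp : 0 < p) (N : ℕ) (x : Fin N → E) (ξ : E) :
    (⨅ i, ‖ξ - x i‖ₑ ^ p) = (⨅ i, ‖ξ - x i‖ₑ) ^ p :=
  ((ENNReal.orderIsoRpow p hp).map_iInf (fun i => ‖ξ - x i‖ₑ)).symm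

lemma quantE_le_coupling (p : ℝ) (hp : 1 ≤ p) (N : ℕ) (x : Fin N → E) (μ ν : Measure E)
    (π : Measure (E × E)) (h1 : π.map Prod.fst = μ) (h2 : π.map Prod.snd = ν) :
    quantE p N μ x ^ (1 / p) ≤ quantE p N ν x ^ (1 / p) +
      (∫⁻ q, ‖q.1 - q.2‖ₑ ^ p ∂π) ^ (1 / p) ∧
    quantE p N ν x ^ (1 / p) ≤ quantE p N μ x ^ (1 / p) +
      (∫⁻ q, ‖q.1 - q.2‖ₑ ^ p ∂π) ^ (1 / p) := by
  have hp0 : 0 < p := by linarith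
  set D : E → ℝ≥0∞ := fun ξ => ⨅ i, ‖ξ - x i‖ₑ with hD
  have mD : Measurable D := Measurable.iInf fun i => by fun_prop
  have hq : ∀ m : Measure E, quantE p N m x = ∫⁻ ξ, D ξ ^ p ∂m := by
    intro m
    unfold quantE
    simp_rw [infpow_eq p hp0]
    rfl
  have e1 : quantE p N μ x = ∫⁻ q, D q.1 ^ p ∂π := by
    rw [hq, ← h1, lintegral_map (by fun_prop) measurable_fst]
  have e2 : quantE p N ν x = ∫⁻ q, D q.2 ^ p ∂π := by
    rw [hq, ← h2, lintegral_map (by fun_prop) measurable_snd]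
  have tri : ∀ u v : E, D u ≤ D v + ‖u - v‖ₑ := by
    intro u v
    simp only [hD]
    rw [ENNReal.iInf_add]
    refine le_iInf fun i => (iInf_le _ i).trans ?_
    calc ‖u - x i‖ₑ = ‖(v - x i) + (u - v)‖ₑ := by congr 1; abel
      _ ≤ _ := enorm_add_le _ _
  have hp1 : 0 ≤ 1 / p := by positivity
  constructor
  · rw [e1, e2]
    refine le_trans ?_ (ENNReal.lintegral_Lp_add_le (f := fun q : E × E => D q.2)
      (g := fun q : E × E => ‖q.1 - q.2‖ₑ) (by fun_prop) (by fun_prop) hp)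
    refine ENNReal.rpow_le_rpow (lintegral_mono fun q => ?_) hp1
    exact ENNReal.rpow_le_rpow (tri _ _) hp0.le
  · rw [e1, e2]
    refine le_trans ?_ (ENNReal.lintegral_Lp_add_le (f := fun q : E × E => D q.1)
      (g := fun q : E × E => ‖q.1 - q.2‖ₑ) (by fun_prop) (by fun_prop) hp)
    refine ENNReal.rpow_le_rpow (lintegral_mono fun q => ?_) hp1
    refine ENNReal.rpow_le_rpow ((tri q.2 q.1).trans (le_of_eq ?_)) hp0.le
    rw [enorm_sub_rev]; rfl

lemma le_wCost {p : ℝ} (hp : 1 ≤ p) {μ ν : Measure E} {a b : ℝ≥0∞}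
    (h : ∀ π : Measure (E × E), π.map Prod.fst = μ → π.map Prod.snd = ν →
      a ≤ b + (∫⁻ q, ‖q.1 - q.2‖ₑ ^ p ∂π) ^ (1 / p)) : a ≤ b + wCost p μ ν ^ (1 / p) := by
  have hp0 : 0 < p := by linarith
  rw [← tsub_le_iff_left, one_div, ENNReal.le_rpow_inv_iff hp0]
  refine le_iInf₂ fun π hπ => ?_
  have := h π hπ.1 hπ.2
  rw [← tsub_le_iff_left, one_div, ENNReal.le_rpow_inv_iff hp0] at this
  exact this

lemma wCost_ne_top (p : ℝ) (hp : 1 ≤ p) (μ ν : Measure E) [IsProbabilityMeasure μ]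
    [IsProbabilityMeasure ν] (hμ : ∫⁻ x, ‖x‖ₑ ^ p ∂μ ≠ ∞) (hν : ∫⁻ x, ‖x‖ₑ ^ p ∂ν ≠ ∞) :
    wCost p μ ν ≠ ∞ := by
  have htwo : (2 : ℝ≥0∞) ^ (p - 1) ≠ ∞ := by
    apply ENNReal.rpow_ne_top_of_nonneg (by linarith); simp
  refine ne_top_of_le_ne_top ?_ (wCost_le p μ ν (μ.prod ν) (by simp [Measure.map_fst_prod])
    (by simp [Measure.map_snd_prod]))
  have h : ∫⁻ q, ‖q.1 - q.2‖ₑ ^ p ∂(μ.prod ν)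
          ≤ ∫⁻ q, 2 ^ (p - 1) * (‖q.1‖ₑ ^ p + ‖q.2‖ₑ ^ p) ∂(μ.prod ν) := by
    refine lintegral_mono fun q => ?_
    refine le_trans ?_ (ENNReal.rpow_add_le_mul_rpow_add_rpow _ _ hp)
    gcongr
    exact enorm_sub_le
  refine ne_top_of_le_ne_top ?_ h
  rw [lintegral_const_mul _ (by fun_prop), lintegral_prod _ (by fun_prop)]
  simp_rw [lintegral_add_left measurable_const, lintegral_const]
  rw [lintegral_add_right _ measurable_const, lintegral_mul_const _ (by fun_prop), lintegral_const]
  simp only [measure_univ, mul_one]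
  exact ENNReal.mul_ne_top htwo (ENNReal.add_ne_top.2 ⟨hμ, hν⟩)

lemma quantErr_eq (p : ℝ) (N : ℕ) (μ : Measure E) (x : Fin N → E) :
    quantErr p N μ x = (quantE p N μ x ^ (1 / p)).toReal := by
  rw [← ENNReal.toReal_rpow]; rfl

lemma wass_eq (p : ℝ) (μ ν : Measure E) :
    wassersteinDist p μ ν = (wCost p μ ν ^ (1 / p)).toReal := by
  rw [← ENNReal.toReal_rpow]; rfl

lemma abs_quantErr_le (p : ℝ) (hp : 1 ≤ p) (N : ℕ) (i : Fin N) (x : Fin N → E) (μ ν : Measure E)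
    [IsProbabilityMeasure μ]
    [IsProbabilityMeasure ν] (hμ : ∫⁻ x, ‖x‖ₑ ^ p ∂μ ≠ ∞) (hν : ∫⁻ x, ‖x‖ₑ ^ p ∂ν ≠ ∞) :
    |quantErr p N μ x - quantErr p N ν x| ≤ wassersteinDist p μ ν := by
  have hp1 : 0 ≤ 1 / p := by positivity
  have fμ : quantE p N μ x ^ (1 / p) ≠ ∞ :=
    ENNReal.rpow_ne_top_of_nonneg hp1 (quantE_ne_top p hp N i μ hμ x)
  have fν : quantE p N ν x ^ (1 / p) ≠ ∞ :=
    ENNReal.rpow_ne_top_of_nonneg hp1 (quantE_ne_top p hp N i ν hν x)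
  have fw : wCost p μ ν ^ (1 / p) ≠ ∞ :=
    ENNReal.rpow_ne_top_of_nonneg hp1 (wCost_ne_top p hp μ ν hμ hν)
  rw [quantErr_eq, quantErr_eq, wass_eq, abs_le]
  have h1 : quantE p N μ x ^ (1 / p) ≤ quantE p N ν x ^ (1 / p) + wCost p μ ν ^ (1 / p) :=
    le_wCost hp fun π a b => (quantE_le_coupling p hp N x μ ν π a b).1
  have h2 : quantE p N ν x ^ (1 / p) ≤ quantE p N μ x ^ (1 / p) + wCost p μ ν ^ (1 / p) :=
    le_wCost hp fun π a b => (quantE_le_coupling p hp N x μ ν π a b).2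
  have h1' := ENNReal.toReal_mono (ENNReal.add_ne_top.2 ⟨fν, fw⟩) h1
  have h2' := ENNReal.toReal_mono (ENNReal.add_ne_top.2 ⟨fμ, fw⟩) h2
  rw [ENNReal.toReal_add fν fw] at h1'
  rw [ENNReal.toReal_add fμ fw] at h2'
  constructor <;> linarith

lemma bdd_quantErr (p : ℝ) (hp : 1 ≤ p) (N : ℕ) (i : Fin N) (μ ν : Measure E)
    [IsProbabilityMeasure μ]
    [IsProbabilityMeasure ν] (hμ : ∫⁻ x, ‖x‖ₑ ^ p ∂μ ≠ ∞) (hν : ∫⁻ x, ‖x‖ₑ ^ p ∂ν ≠ ∞) :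
    BddAbove (Set.range fun x : Fin N → E => |quantErr p N μ x - quantErr p N ν x|) := by
  refine ⟨wassersteinDist p μ ν, ?_⟩
  rintro _ ⟨x, rfl⟩
  exact abs_quantErr_le p hp N i x μ ν hμ hν

lemma qDist_to_wCost (p : ℝ) (hp : 1 ≤ p) (N : ℕ) (i : Fin N) (hG : Subsingleton E ∨ GoodPts E N)
    (μ : ℕ → Measure E) (ν : Measure E) [∀ n, IsProbabilityMeasure (μ n)] [IsProbabilityMeasure ν]
    (hμ : ∀ n, ∫⁻ x, ‖x‖ₑ ^ p ∂(μ n) ≠ ∞) (hν : ∫⁻ x, ‖x‖ₑ ^ p ∂ν ≠ ∞)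
    (hQ : Tendsto (fun n => qDist p N (μ n) ν) atTop (𝓝 0)) :
    Tendsto (fun n => wCost p (μ n) ν) atTop (𝓝 0) := by
  have hp0 : 0 < p := by linarith
  have hp1 : 0 ≤ 1 / p := by positivity
  have hE : ∀ x, Tendsto (fun n => quantE p N (μ n) x) atTop (𝓝 (quantE p N ν x)) := by
    intro x
    have h1 : Tendsto (fun n => quantErr p N (μ n) x) atTop (𝓝 (quantErr p N ν x)) := by
      rw [tendsto_iff_norm_sub_tendsto_zero]
      refine squeeze_zero (fun n => norm_nonneg _) (fun n => ?_) hQ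
      exact le_ciSup (bdd_quantErr p hp N i (μ n) ν (hμ n) hν) x
    simp_rw [quantErr_eq] at h1
    rw [ENNReal.tendsto_toReal_iff (fun n =>
      ENNReal.rpow_ne_top_of_nonneg hp1 (quantE_ne_top p hp N i (μ n) (hμ n) x))
      (ENNReal.rpow_ne_top_of_nonneg hp1 (quantE_ne_top p hp N i ν hν x))] at h1
    have h2 := h1.ennrpow_const p
    simpa only [← ENNReal.rpow_mul, one_div, inv_mul_cancel₀ hp0.ne', ENNReal.rpow_one] using h2
  have hM : Tendsto (fun n => ∫⁻ x, ‖x‖ₑ ^ p ∂(μ n)) atTop (𝓝 (∫⁻ x, ‖x‖ₑ ^ p ∂ν)) := by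
    have := hE (fun _ => 0)
    have hne : Nonempty (Fin N) := ⟨i⟩
    simpa only [quantE, sub_zero, iInf_const] using this
  refine wCost_tendsto_zero p hp Measure.addHaar μ ν hμ hν hM fun r hr => ?_
  rcases hG with h | h
  · exact exists_kernel_triv _ μ ν r
  · exact exists_kernel p hp N h _ μ ν hμ hν hE r hr

lemma measure_closed_le (p : ℝ) (hp : 1 ≤ p) (μ ν : Measure E) [IsProbabilityMeasure μ]
    [IsProbabilityMeasure ν] (h : wCost p μ ν = 0) (F : Set E) (hF : IsClosed F) :
    μ F ≤ ν F ∧ ν F ≤ μ F := by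
  have hp0 : 0 < p := by linarith
  have mark : ∀ δ : ℝ, 0 < δ → μ F ≤ ν (Metric.cthickening δ F) ∧ ν F ≤ μ (Metric.cthickening δ F) := by
    intro δ hδ
    have hδ0 : ENNReal.ofReal δ ^ p ≠ 0 := by
      simp [ENNReal.rpow_eq_zero_iff, hδ, hp0, hp0.le]
    have hδt : ENNReal.ofReal δ ^ p ≠ ∞ := ENNReal.rpow_ne_top_of_nonneg hp0.le (by simp)
    have mC : MeasurableSet (Metric.cthickening δ F) := Metric.isClosed_cthickening.measurableSet
    have bad : ∀ (π : Measure (E × E)), π {q | ENNReal.ofReal δ ^ p ≤ ‖q.1 - q.2‖ₑ ^ p} ≤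
        (ENNReal.ofReal δ ^ p)⁻¹ * ∫⁻ q, ‖q.1 - q.2‖ₑ ^ p ∂π := by
      intro π
      have := mul_meas_ge_le_lintegral (μ := π) (f := fun q : E × E => ‖q.1 - q.2‖ₑ ^ p)
        (by fun_prop) (ENNReal.ofReal δ ^ p)
      rwa [ENNReal.mul_le_iff_le_inv hδ0 hδt] at this
    have close : ∀ u v : E, u ∈ F → v ∉ Metric.cthickening δ F →
        ENNReal.ofReal δ ≤ ‖u - v‖ₑ := by
      intro u v hu hv
      rw [Metric.mem_cthickening_iff, not_le] at hv
      refine hv.le.trans ((Metric.infEDist_le_edist_of_mem hu).trans (le_of_eq ?_))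
      rw [edist_comm, edist_eq_enorm_sub]
    have all : ∀ (a b : ℝ≥0∞), (∀ π : Measure (E × E), π.map Prod.fst = μ → π.map Prod.snd = ν →
        a ≤ b + (ENNReal.ofReal δ ^ p)⁻¹ * ∫⁻ q, ‖q.1 - q.2‖ₑ ^ p ∂π) → a ≤ b := by
      intro a b hab
      have h0 : ENNReal.ofReal δ ^ p * (a - b) ≤ wCost p μ ν := by
        refine le_iInf₂ fun π hπ => ?_
        rw [ENNReal.mul_le_iff_le_inv hδ0 hδt, tsub_le_iff_left]
        exact hab π hπ.1 hπ.2
      rw [h, nonpos_iff_eq_zero, mul_eq_zero] at h0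
      exact tsub_eq_zero_iff_le.1 (h0.resolve_left hδ0)
    constructor
    · refine all _ _ fun π h1 h2 => ?_
      rw [← h1, ← h2, Measure.map_apply measurable_fst hF.measurableSet,
        Measure.map_apply measurable_snd mC]
      refine le_trans (measure_mono ?_) ((measure_union_le _ _).trans (add_le_add le_rfl (bad π)))
      intro q hq
      by_cases hq2 : q.2 ∈ Metric.cthickening δ F
      · exact Or.inl hq2
      · exact Or.inr (ENNReal.rpow_le_rpow (close _ _ hq hq2) hp0.le)
    · refine all _ _ fun π h1 h2 => ?_
      rw [← h1, ← h2, Measure.map_apply measurable_snd hF.measurableSet,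
        Measure.map_apply measurable_fst mC]
      refine le_trans (measure_mono ?_) ((measure_union_le _ _).trans (add_le_add le_rfl (bad π)))
      intro q hq
      by_cases hq2 : q.1 ∈ Metric.cthickening δ F
      · exact Or.inl hq2
      · refine Or.inr (ENNReal.rpow_le_rpow ?_ hp0.le)
        rw [enorm_sub_rev]
        exact close _ _ hq hq2
  have lim : ∀ (m : Measure E) [IsProbabilityMeasure m],
      Tendsto (fun δ => m (Metric.cthickening δ F)) (𝓝[>] 0) (𝓝 (m F)) := fun m _ =>
    (tendsto_measure_cthickening_of_isClosed ⟨1, one_pos, measure_ne_top _ _⟩ hF).mono_left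
      nhdsWithin_le_nhds
  constructor
  · exact ge_of_tendsto (lim ν) (by
      filter_upwards [self_mem_nhdsWithin] with δ hδ using (mark δ hδ).1)
  · exact ge_of_tendsto (lim μ) (by
      filter_upwards [self_mem_nhdsWithin] with δ hδ using (mark δ hδ).2)

lemma eq_of_wCost (p : ℝ) (hp : 1 ≤ p) (μ ν : Measure E) [IsProbabilityMeasure μ]
    [IsProbabilityMeasure ν] (h : wCost p μ ν = 0) : μ = ν := by
  refine ext_of_generate_finite {s | IsClosed s} ?_ isPiSystem_isClosed ?_ (by simp)
  · rw [BorelSpace.measurable_eq (α := E), borel_eq_generateFrom_isClosed]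
  · intro F hF
    have := measure_closed_le p hp μ ν h F hF
    exact le_antisymm this.1 this.2

end Final

/-- for `p ∈ [1, ∞)` and `N ≥ c(d, ‖·‖) + 1` (or `N ≥ d + 2` when the norm is
Euclidean), `Q_{N,p}` is finite on probability measures on `ℝ^d` with finite `p`-th moments,
is a metric there (symmetric, triangle inequality, vanishing exactly on the diagonal), and is
topologically equivalent to `W_p`: `Q_{N,p}(μ_n, μ_∞) → 0 ↔ W_p(μ_n, μ_∞) → 0`. -/
theorem stmt9 {E : Type*} [NormedAddCommGroup E] [NormedSpace ℝ E]
    [FiniteDimensional ℝ E] [MeasurableSpace E] [BorelSpace E]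
    (p : ℝ) (hp : 1 ≤ p) (N : ℕ)
    (hN : coverNum E + 1 ≤ N ∨
      (Nonempty (InnerProductSpace ℝ E) ∧ Module.finrank ℝ E + 2 ≤ N)) :
    (∀ μ ν : Measure E, IsProbabilityMeasure μ → IsProbabilityMeasure ν →
      HasFiniteMoment p μ → HasFiniteMoment p ν →
      BddAbove (Set.range fun x : Fin N → E => |quantErr p N μ x - quantErr p N ν x|)) ∧
    (∀ μ ν : Measure E, IsProbabilityMeasure μ → IsProbabilityMeasure ν →
      HasFiniteMoment p μ → HasFiniteMoment p ν →
      qDist p N μ ν = qDist p N ν μ) ∧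
    (∀ μ ν ρ : Measure E, IsProbabilityMeasure μ → IsProbabilityMeasure ν →
      IsProbabilityMeasure ρ →
      HasFiniteMoment p μ → HasFiniteMoment p ν → HasFiniteMoment p ρ →
      qDist p N μ ρ ≤ qDist p N μ ν + qDist p N ν ρ) ∧
    (∀ μ ν : Measure E, IsProbabilityMeasure μ → IsProbabilityMeasure ν →
      HasFiniteMoment p μ → HasFiniteMoment p ν →
      (qDist p N μ ν = 0 ↔ μ = ν)) ∧
    (∀ (μ : ℕ → Measure E) (μ' : Measure E),
      (∀ n, IsProbabilityMeasure (μ n)) → IsProbabilityMeasure μ' →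
      (∀ n, HasFiniteMoment p (μ n)) → HasFiniteMoment p μ' →
      (Tendsto (fun n => qDist p N (μ n) μ') atTop (𝓝 0) ↔
        Tendsto (fun n => wassersteinDist p (μ n) μ') atTop (𝓝 0))) := by
  have hp0 : 0 < p := by linarith
  have hp1 : 0 < 1 / p := by positivity
  have hNpos : 0 < N := by rcases hN with h | h <;> omega
  have i : Fin N := ⟨0, hNpos⟩
  have hG : Subsingleton E ∨ GoodPts E N := by
    rcases subsingleton_or_nontrivial E with h | h
    · exact Or.inl h
    · exact Or.inr (goodPts_hyp N hN)
  have hne : Nonempty (Fin N → E) := ⟨fun _ => 0⟩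
  refine ⟨?_, ?_, ?_, ?_, ?_⟩
  · intro μ ν _ _ hμ hν
    exact bdd_quantErr p hp N i μ ν hμ hν
  · intro μ ν _ _ hμ hν
    unfold qDist
    simp_rw [abs_sub_comm]
  · intro μ ν ρ _ _ _ hμ hν hρ
    refine ciSup_le fun x => ?_
    refine (abs_sub_le _ (quantErr p N ν x) _).trans (add_le_add ?_ ?_)
    · exact le_ciSup (bdd_quantErr p hp N i μ ν hμ hν) x
    · exact le_ciSup (bdd_quantErr p hp N i ν ρ hν hρ) x
  · intro μ ν _ _ hμ hν
    constructor
    · intro h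
      apply eq_of_wCost p hp μ ν
      have := qDist_to_wCost p hp N i hG (fun _ => μ) ν (fun _ => hμ) hν (by simp [h])
      exact tendsto_nhds_unique tendsto_const_nhds this
    · rintro rfl
      simp [qDist]
  · intro μ ν _ _ hμ hν
    constructor
    · intro h
      have h1 := (qDist_to_wCost p hp N i hG μ ν hμ hν h).ennrpow_const (1 / p)
      rw [ENNReal.zero_rpow_of_pos hp1] at h1
      have h2 := (ENNReal.tendsto_toReal ENNReal.zero_ne_top).comp h1
      simp_rw [wass_eq]
      exact h2
    · intro h
      refine squeeze_zero (fun n => ?_) (fun n => ?_) h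
      · exact Real.iSup_nonneg fun x => abs_nonneg _
      · exact ciSup_le fun x => abs_quantErr_le p hp N i x (μ n) ν (hμ n) hν
end

section
/- Let H be a separable Hilbert space and let μ_n (n ≥ 1) and μ_∞ be Borel probability measures on H with finite second moments. Assume that ∫_H ‖ξ‖² dμ_n(ξ) → ∫_H ‖ξ‖² dμ_∞(ξ) as n → ∞, and that for every u ∈ H with ‖u‖ = 1 the pushforward of μ_n under ξ ↦ ⟨ξ, u⟩ converges weakly on ℝ to the pushforward of μ_∞ under the same map. Then W_2(μ_n, μ_∞) → 0 as n → ∞. -/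
open MeasureTheory Filter Topology
open scoped ENNReal NNReal RealInnerProductSpace

lemma prod_coupling {H : Type*} [MeasurableSpace H] (p q : Measure H) [IsFiniteMeasure p]
    [IsFiniteMeasure q] (h : p Set.univ = q Set.univ) :
    ((p Set.univ)⁻¹ • p.prod q).map Prod.fst = p ∧
    ((p Set.univ)⁻¹ • p.prod q).map Prod.snd = q := by
  by_cases h0 : p Set.univ = 0
  · have hp : p = 0 := Measure.measure_univ_eq_zero.mp h0
    have hq : q = 0 := Measure.measure_univ_eq_zero.mp (h ▸ h0)
    subst hp; subst hq; simp
  · have ht : p Set.univ ≠ ∞ := measure_ne_top _ _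
    constructor
    · rw [Measure.map_smul, Measure.map_fst_prod, ← h, smul_smul,
        ENNReal.inv_mul_cancel h0 ht, one_smul]
    · rw [Measure.map_smul, Measure.map_snd_prod, smul_smul,
        ENNReal.inv_mul_cancel h0 ht, one_smul]

lemma prod_coupling_mass {H : Type*} [MeasurableSpace H] (p q : Measure H) [IsFiniteMeasure p]
    [IsFiniteMeasure q] (h : p Set.univ = q Set.univ) :
    ((p Set.univ)⁻¹ • p.prod q) Set.univ = p Set.univ := by
  conv_rhs => rw [← (prod_coupling p q h).1]
  rw [Measure.map_apply measurable_fst MeasurableSet.univ]; simp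

lemma sq_cost_le {H : Type*} [NormedAddCommGroup H] (x y : H) :
    (‖x - y‖₊ : ℝ≥0∞) ^ (2:ℝ) ≤ 2 * (‖x‖₊ : ℝ≥0∞) ^ (2:ℝ) + 2 * (‖y‖₊ : ℝ≥0∞) ^ (2:ℝ) := by
  simp only [ENNReal.rpow_ofNat]
  norm_cast
  rw [← NNReal.coe_le_coe]
  push_cast
  have := norm_sub_le x y
  nlinarith [sq_nonneg (‖x‖ - ‖y‖), norm_nonneg (x - y)]

lemma prod_coupling_cost {H : Type*} [NormedAddCommGroup H] [MeasurableSpace H] [BorelSpace H]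
    [SecondCountableTopology H] (p q : Measure H) [IsFiniteMeasure p]
    [IsFiniteMeasure q] (h : p Set.univ = q Set.univ) :
    ∫⁻ z, (‖z.1 - z.2‖₊ : ℝ≥0∞) ^ (2:ℝ) ∂((p Set.univ)⁻¹ • p.prod q) ≤
      2 * ∫⁻ x, (‖x‖₊ : ℝ≥0∞) ^ (2:ℝ) ∂p + 2 * ∫⁻ x, (‖x‖₊ : ℝ≥0∞) ^ (2:ℝ) ∂q := by
  obtain ⟨h1, h2⟩ := prod_coupling p q h
  set π := (p Set.univ)⁻¹ • p.prod q
  calc _ ≤ ∫⁻ z, (2 * (‖z.1‖₊ : ℝ≥0∞) ^ (2:ℝ) + 2 * (‖z.2‖₊ : ℝ≥0∞) ^ (2:ℝ)) ∂π :=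
        lintegral_mono fun z => sq_cost_le _ _
    _ = 2 * ∫⁻ z, (‖z.1‖₊ : ℝ≥0∞) ^ (2:ℝ) ∂π + 2 * ∫⁻ z, (‖z.2‖₊ : ℝ≥0∞) ^ (2:ℝ) ∂π := by
        rw [lintegral_add_left (by fun_prop), lintegral_const_mul _ (by fun_prop),
          lintegral_const_mul _ (by fun_prop)]
    _ = _ := by
        conv_rhs => rw [← h1, ← h2]
        rw [lintegral_map (by fun_prop) measurable_fst, lintegral_map (by fun_prop) measurable_snd]

lemma prod_coupling_cost_small {H : Type*} [NormedAddCommGroup H] [MeasurableSpace H] [BorelSpace H]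
    [SecondCountableTopology H] (p q : Measure H) [IsFiniteMeasure p]
    [IsFiniteMeasure q] (h : p Set.univ = q Set.univ) (S : Set H)
    (hp : ∀ᵐ x ∂p, x ∈ S) (hq : ∀ᵐ x ∂q, x ∈ S) (d : ℝ≥0)
    (hS : ∀ x ∈ S, ∀ y ∈ S, ‖x - y‖₊ ≤ d) :
    ∫⁻ z, (‖z.1 - z.2‖₊ : ℝ≥0∞) ^ (2:ℝ) ∂((p Set.univ)⁻¹ • p.prod q) ≤
      (d : ℝ≥0∞) ^ (2:ℝ) * p Set.univ := by
  have hm := prod_coupling_mass p q h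
  obtain ⟨h1, h2⟩ := prod_coupling p q h
  set π := (p Set.univ)⁻¹ • p.prod q
  rw [← hm, ← lintegral_const]
  refine lintegral_mono_ae ?_
  have e1 : ∀ᵐ z ∂π, z.1 ∈ S := by
    rw [← h1] at hp; exact ae_of_ae_map measurable_fst.aemeasurable hp
  have e2 : ∀ᵐ z ∂π, z.2 ∈ S := by
    rw [← h2] at hq; exact ae_of_ae_map measurable_snd.aemeasurable hq
  filter_upwards [e1, e2] with z hz1 hz2
  gcongr
  exact_mod_cast hS _ hz1 _ hz2

/-- decomposition of one measure -/
lemma split_measure {H : Type*} [MeasurableSpace H] (μ : Measure H) [IsProbabilityMeasure μ]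
    (K : ℕ) (φ : ℕ → H → ℝ≥0) (hφ : ∀ i, Measurable (φ i))
    (hsum : ∀ x, ∑ i ∈ Finset.range K, φ i x ≤ 1) (m : ℕ → ℝ≥0∞)
    (hm : ∀ i, m i ≤ ∫⁻ x, φ i x ∂μ) :
    ∃ (p : ℕ → Measure H) (α : Measure H), μ = ∑ i ∈ Finset.range K, p i + α ∧
      (∀ i ∈ Finset.range K, p i Set.univ = m i) ∧ ∀ i, ∀ᵐ x ∂(p i), φ i x ≠ 0 := by
  let c : ℕ → ℝ≥0∞ := fun i => m i / ∫⁻ x, φ i x ∂μ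
  have hc : ∀ i, c i ≤ 1 := fun i => ENNReal.div_le_of_le_mul (by simpa using hm i)
  let f : H → ℝ≥0∞ := fun x => ∑ i ∈ Finset.range K, c i * φ i x
  have hf : Measurable f := by fun_prop
  have hf1 : ∀ x, f x ≤ 1 := fun x => by
    calc f x ≤ ∑ i ∈ Finset.range K, (φ i x : ℝ≥0∞) := by
          refine Finset.sum_le_sum fun i _ => ?_
          calc c i * φ i x ≤ 1 * φ i x := by gcongr; exact hc i
            _ = _ := one_mul _
      _ ≤ 1 := by exact_mod_cast hsum x
  refine ⟨fun i => μ.withDensity (fun x => c i * φ i x), μ.withDensity (fun x => 1 - f x),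
    ?_, ?_, ?_⟩
  · ext s hs
    rw [Measure.add_apply, Measure.finsetSum_apply, withDensity_apply _ hs]
    simp_rw [withDensity_apply _ hs]
    rw [← lintegral_finsetSum _ (by fun_prop), ← lintegral_add_left (by fun_prop)]
    have : ∀ x, ∑ i ∈ Finset.range K, c i * φ i x + (1 - f x) = 1 := fun x =>
      add_tsub_cancel_of_le (hf1 x)
    simp [this]
  · intro i hi
    have hle : ∫⁻ x, φ i x ∂μ ≤ 1 := by
      calc ∫⁻ x, φ i x ∂μ ≤ ∫⁻ x, 1 ∂μ := lintegral_mono fun x => by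
            have := (Finset.single_le_sum (f := fun i => φ i x) (fun _ _ => zero_le) hi).trans
              (hsum x)
            exact ENNReal.coe_le_one_iff.mpr this
        _ = 1 := by simp
    rw [withDensity_apply _ MeasurableSet.univ, Measure.restrict_univ,
      lintegral_const_mul _ (by fun_prop)]
    refine ENNReal.div_mul_cancel' (fun h0 => ?_) (fun h => ?_)
    · have := hm i; rw [h0] at this; simpa using this
    · exact absurd (h ▸ hle) (by simp)
  · intro i
    rw [ae_withDensity_iff (by fun_prop)]
    filter_upwards with x hx h
    simp [h] at hx

lemma coupling_bound {H : Type*} [NormedAddCommGroup H] [MeasurableSpace H] [BorelSpace H]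
    [SecondCountableTopology H] (μ ν : Measure H) [IsProbabilityMeasure μ] [IsProbabilityMeasure ν]
    (K : ℕ) (φ : ℕ → H → ℝ≥0) (hφ : ∀ i, Measurable (φ i))
    (hsum : ∀ x, ∑ i ∈ Finset.range K, φ i x ≤ 1) (d : ℝ≥0)
    (hd : ∀ i x y, φ i x ≠ 0 → φ i y ≠ 0 → ‖x - y‖₊ ≤ d) :
    ∃ α β : Measure H, α ≤ μ ∧ β ≤ ν ∧
      α Set.univ = 1 - ∑ i ∈ Finset.range K, min (∫⁻ x, φ i x ∂μ) (∫⁻ x, φ i x ∂ν) ∧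
      β Set.univ = 1 - ∑ i ∈ Finset.range K, min (∫⁻ x, φ i x ∂μ) (∫⁻ x, φ i x ∂ν) ∧
      (⨅ π ∈ {π : Measure (H × H) | π.map Prod.fst = μ ∧ π.map Prod.snd = ν},
        ∫⁻ q, (‖q.1 - q.2‖₊ : ℝ≥0∞) ^ (2:ℝ) ∂π) ≤ (d : ℝ≥0∞) ^ (2:ℝ) +
        (2 * ∫⁻ x, (‖x‖₊ : ℝ≥0∞) ^ (2:ℝ) ∂α + 2 * ∫⁻ x, (‖x‖₊ : ℝ≥0∞) ^ (2:ℝ) ∂β) := by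
  set m : ℕ → ℝ≥0∞ := fun i => min (∫⁻ x, φ i x ∂μ) (∫⁻ x, φ i x ∂ν) with hm
  obtain ⟨p, α, hp, hpm, hps⟩ := split_measure μ K φ hφ hsum m (fun i => min_le_left _ _)
  obtain ⟨q, β, hq, hqm, hqs⟩ := split_measure ν K φ hφ hsum m (fun i => min_le_right _ _)
  have key : ∀ (ρ : Measure H) [IsProbabilityMeasure ρ] (r : ℕ → Measure H) (γ : Measure H),
      ρ = ∑ i ∈ Finset.range K, r i + γ → (∀ i ∈ Finset.range K, r i Set.univ = m i) →
      γ ≤ ρ ∧ (∀ i ∈ Finset.range K, r i ≤ ρ) ∧ ∑ i ∈ Finset.range K, m i ≤ 1 ∧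
        γ Set.univ = 1 - ∑ i ∈ Finset.range K, m i := by
    intro ρ _ r γ h hr
    have hu : ∑ i ∈ Finset.range K, m i + γ Set.univ = 1 := by
      have : ρ Set.univ = 1 := measure_univ
      rw [h, Measure.add_apply, Measure.finsetSum_apply, Finset.sum_congr rfl hr] at this
      exact this
    have hle : ∑ i ∈ Finset.range K, m i ≤ 1 := by rw [← hu]; exact le_self_add
    refine ⟨?_, ?_, hle, ?_⟩
    · rw [h]; exact Measure.le_add_left le_rfl
    · intro i hi
      rw [h]
      refine Measure.le_add_right ?_
      rw [← Finset.add_sum_erase _ _ hi]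
      exact Measure.le_add_right le_rfl
    · refine ENNReal.eq_sub_of_add_eq (ne_top_of_le_ne_top ENNReal.one_ne_top hle) ?_
      rw [add_comm]; exact hu
  obtain ⟨hα, hpl, hm1, hαm⟩ := key μ p α hp hpm
  obtain ⟨hβ, hql, -, hβm⟩ := key ν q β hq hqm
  refine ⟨α, β, hα, hβ, hαm, hβm, ?_⟩
  have fα : IsFiniteMeasure α := isFiniteMeasure_of_le μ hα
  have fβ : IsFiniteMeasure β := isFiniteMeasure_of_le ν hβ
  have fp : ∀ i ∈ Finset.range K, IsFiniteMeasure (p i) :=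
    fun i hi => isFiniteMeasure_of_le μ (hpl i hi)
  have fq : ∀ i ∈ Finset.range K, IsFiniteMeasure (q i) :=
    fun i hi => isFiniteMeasure_of_le ν (hql i hi)
  have hab : α Set.univ = β Set.univ := by rw [hαm, hβm]
  have hpq : ∀ i ∈ Finset.range K, p i Set.univ = q i Set.univ := fun i hi => by
    rw [hpm i hi, hqm i hi]
  let π : Measure (H × H) := ∑ i ∈ Finset.range K, ((p i Set.univ)⁻¹ • (p i).prod (q i)) +
    (α Set.univ)⁻¹ • α.prod β
  have hπ1 : π.map Prod.fst = μ := by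
    rw [Measure.map_add _ _ measurable_fst, (prod_coupling α β hab).1,
      ← Measure.mapₗ_apply_of_measurable measurable_fst, map_sum]
    conv_rhs => rw [hp]
    congr 1
    refine Finset.sum_congr rfl fun i hi => ?_
    have := fp i hi; have := fq i hi
    rw [Measure.mapₗ_apply_of_measurable measurable_fst, (prod_coupling _ _ (hpq i hi)).1]
  have hπ2 : π.map Prod.snd = ν := by
    rw [Measure.map_add _ _ measurable_snd, (prod_coupling α β hab).2,
      ← Measure.mapₗ_apply_of_measurable measurable_snd, map_sum]
    conv_rhs => rw [hq]
    congr 1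
    refine Finset.sum_congr rfl fun i hi => ?_
    have := fp i hi; have := fq i hi
    rw [Measure.mapₗ_apply_of_measurable measurable_snd, (prod_coupling _ _ (hpq i hi)).2]
  refine (iInf₂_le π ⟨hπ1, hπ2⟩).trans ?_
  rw [lintegral_add_measure, lintegral_finsetSum_measure]
  refine add_le_add ?_ (prod_coupling_cost α β hab)
  calc _ ≤ ∑ i ∈ Finset.range K, (d : ℝ≥0∞) ^ (2:ℝ) * m i := by
        refine Finset.sum_le_sum fun i hi => ?_
        have := fp i hi; have := fq i hi
        rw [← hpm i hi]
        exact prod_coupling_cost_small _ _ (hpq i hi) {x | φ i x ≠ 0} (hps i) (hqs i) d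
          (fun x hx y hy => hd i x y hx hy)
    _ = (d : ℝ≥0∞) ^ (2:ℝ) * ∑ i ∈ Finset.range K, m i := by rw [Finset.mul_sum]
    _ ≤ (d : ℝ≥0∞) ^ (2:ℝ) * 1 := by gcongr
    _ = _ := mul_one _

/-- bump functions around the points `z j` -/
noncomputable def bumpFn {H : Type*} [PseudoMetricSpace H] (z : ℕ → H) (δ : ℝ) (j : ℕ) (x : H) :
    ℝ≥0 := min 1 (Real.toNNReal (2 - dist x (z j) / δ))

/-- running maxima of the bumps -/
noncomputable def bumpSup {H : Type*} [PseudoMetricSpace H] (z : ℕ → H) (δ : ℝ) : ℕ → H → ℝ≥0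
  | 0 => fun _ => 0
  | (k + 1) => fun x => max (bumpSup z δ k x) (bumpFn z δ k x)

lemma exists_pou {H : Type*} [PseudoMetricSpace H] [Nonempty H]
    [TopologicalSpace.SeparableSpace H] {δ : ℝ} (hδ : 0 < δ) :
    ∃ φ : ℕ → BoundedContinuousFunction H ℝ≥0,
      (∀ K x, ∑ i ∈ Finset.range K, φ i x ≤ 1) ∧
      (∀ x, ∀ᶠ K in atTop, ∑ i ∈ Finset.range K, φ i x = 1) ∧
      ∀ i x y, φ i x ≠ 0 → φ i y ≠ 0 → dist x y ≤ 4 * δ := by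
  let z := TopologicalSpace.denseSeq H
  have hbc : ∀ j, Continuous (bumpFn z δ j) := fun j => by
    unfold bumpFn; fun_prop
  have huc : ∀ k, Continuous (bumpSup z δ k) := fun k => by
    induction k with
    | zero => exact continuous_const
    | succ k ih => exact ih.max (hbc k)
  have hu1 : ∀ k x, bumpSup z δ k x ≤ 1 := fun k x => by
    induction k with
    | zero => simp [bumpSup]
    | succ k ih => exact max_le ih (min_le_left _ _)
  have hmono : ∀ x, Monotone fun k => bumpSup z δ k x := fun x =>
    monotone_nat_of_le_succ fun k => le_max_left _ _
  have hsum : ∀ K x, ∑ i ∈ Finset.range K, (bumpSup z δ (i + 1) x - bumpSup z δ i x)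
      = bumpSup z δ K x := fun K x => by
    have := Finset.sum_range_tsub (hmono x) K
    simpa [bumpSup] using this
  refine ⟨fun i => BoundedContinuousFunction.mkOfBound
    ⟨fun x => bumpSup z δ (i + 1) x - bumpSup z δ i x, (huc _).sub (huc _)⟩ 1 ?_, ?_, ?_, ?_⟩
  · intro x y
    have h1 : bumpSup z δ (i + 1) x - bumpSup z δ i x ≤ 1 := tsub_le_self.trans (hu1 _ _)
    have h2 : bumpSup z δ (i + 1) y - bumpSup z δ i y ≤ 1 := tsub_le_self.trans (hu1 _ _)
    rw [NNReal.dist_eq]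
    have h1' := NNReal.coe_le_coe.mpr h1
    have h2' := NNReal.coe_le_coe.mpr h2
    have h3 := NNReal.coe_nonneg (bumpSup z δ (i + 1) x - bumpSup z δ i x)
    have h4 := NNReal.coe_nonneg (bumpSup z δ (i + 1) y - bumpSup z δ i y)
    simp only [ContinuousMap.coe_mk, abs_le]
    simp only [NNReal.coe_one] at h1' h2'
    constructor <;> linarith
  · intro K x
    exact (hsum K x).trans_le (hu1 K x)
  · intro x
    obtain ⟨j, hj⟩ := (TopologicalSpace.denseRange_denseSeq H).exists_dist_lt x hδ
    have hb : bumpFn z δ j x = 1 := by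
      refine min_eq_left ?_
      rw [Real.one_le_toNNReal]
      have : dist x (z j) / δ < 1 := by rw [div_lt_one hδ]; exact hj
      linarith
    filter_upwards [eventually_ge_atTop (j + 1)] with K hK
    refine (hsum K x).trans (le_antisymm (hu1 K x) ?_)
    calc 1 = bumpFn z δ j x := hb.symm
      _ ≤ bumpSup z δ (j + 1) x := le_max_right _ _
      _ ≤ _ := hmono x hK
  · intro i x y hx hy
    have key : ∀ x, bumpSup z δ (i + 1) x - bumpSup z δ i x ≠ 0 → dist x (z i) ≤ 2 * δ := by
      intro x hx
      by_contra! hcon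
      apply hx
      have hb : bumpFn z δ i x = 0 := by
        have : Real.toNNReal (2 - dist x (z i) / δ) = 0 := by
          rw [Real.toNNReal_eq_zero]
          have : 2 ≤ dist x (z i) / δ := by rw [le_div_iff₀ hδ]; exact hcon.le
          linarith
        unfold bumpFn
        rw [this]; simp
      change max (bumpSup z δ i x) (bumpFn z δ i x) - bumpSup z δ i x = 0
      rw [hb]; simp
    have := dist_triangle_right x y (z i)
    linarith [key x hx, key y hy]

/-- Truncated squared norm as a bounded continuous function. -/
noncomputable def truncSq (H : Type*) [NormedAddCommGroup H] (R : ℝ≥0) :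
    BoundedContinuousFunction H ℝ≥0 :=
  BoundedContinuousFunction.mkOfBound ⟨fun x => min (‖x‖₊ ^ 2) R, by fun_prop⟩ R (by
    intro x y
    have h1 : min (‖x‖₊ ^ 2) R ≤ R := min_le_right _ _
    have h2 : min (‖y‖₊ ^ 2) R ≤ R := min_le_right _ _
    rw [NNReal.dist_eq]
    have h1' := NNReal.coe_le_coe.mpr h1
    have h2' := NNReal.coe_le_coe.mpr h2
    have h3 := NNReal.coe_nonneg (min (‖x‖₊ ^ 2) R)
    have h4 := NNReal.coe_nonneg (min (‖y‖₊ ^ 2) R)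
    simp only [ContinuousMap.coe_mk, abs_le]
    constructor <;> linarith)

lemma truncSq_apply {H : Type*} [NormedAddCommGroup H] (R : ℝ≥0) (x : H) :
    truncSq H R x = min (‖x‖₊ ^ 2) R := rfl

lemma cost_tendsto_of_weak {H : Type*} [NormedAddCommGroup H] [MeasurableSpace H] [BorelSpace H]
    [SecondCountableTopology H] (μ : ℕ → ProbabilityMeasure H) (ν : ProbabilityMeasure H)
    (hw : Tendsto μ atTop (𝓝 ν))
    (hμ : ∀ n, ∫⁻ x, (‖x‖₊ : ℝ≥0∞) ^ (2:ℝ) ∂(μ n : Measure H) ≠ ∞)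
    (hν : ∫⁻ x, (‖x‖₊ : ℝ≥0∞) ^ (2:ℝ) ∂(ν : Measure H) ≠ ∞)
    (hmom : Tendsto (fun n => ∫⁻ x, (‖x‖₊ : ℝ≥0∞) ^ (2:ℝ) ∂(μ n : Measure H)) atTop
      (𝓝 (∫⁻ x, (‖x‖₊ : ℝ≥0∞) ^ (2:ℝ) ∂(ν : Measure H)))) :
    Tendsto (fun n => ⨅ π ∈ {π : Measure (H × H) | π.map Prod.fst = (μ n : Measure H) ∧
        π.map Prod.snd = (ν : Measure H)},
        ∫⁻ q, (‖q.1 - q.2‖₊ : ℝ≥0∞) ^ (2:ℝ) ∂π) atTop (𝓝 0) := by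
  rw [ProbabilityMeasure.tendsto_iff_forall_lintegral_tendsto] at hw
  let E : ℝ≥0 → Measure H → ℝ≥0∞ := fun R ρ => ∫⁻ x, ((‖x‖₊ : ℝ≥0∞) ^ (2:ℝ) - R) ∂ρ
  have hE : ∀ R (ρ : Measure H) [IsProbabilityMeasure ρ],
      E R ρ = ∫⁻ x, (‖x‖₊ : ℝ≥0∞) ^ (2:ℝ) ∂ρ - ∫⁻ x, truncSq H R x ∂ρ := by
    intro R ρ _
    refine ENNReal.eq_sub_of_add_eq ?_ ?_
    · refine ne_top_of_le_ne_top (ENNReal.coe_ne_top (r := R)) ?_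
      calc ∫⁻ x, truncSq H R x ∂ρ ≤ ∫⁻ x, (R : ℝ≥0∞) ∂ρ := lintegral_mono fun x => by
            exact ENNReal.coe_le_coe.mpr (min_le_right _ _)
        _ = R := by simp
    · rw [← lintegral_add_left (by fun_prop)]
      refine lintegral_congr fun x => ?_
      simp only [truncSq_apply, ENNReal.rpow_ofNat]
      norm_cast
      rcases le_total (‖x‖₊ ^ 2) R with h | h
      · rw [min_eq_left h, tsub_eq_zero_of_le h, zero_add]
      · rw [min_eq_right h, tsub_add_cancel_of_le h]
  have hEt : ∀ R, Tendsto (fun n => E R (μ n)) atTop (𝓝 (E R ν)) := by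
    intro R
    simp_rw [hE]
    exact ENNReal.Tendsto.sub hmom (hw (truncSq H R)) (Or.inl hν)
  have hE0 : Tendsto (fun k : ℕ => E k ν) atTop (𝓝 0) := by
    have : Tendsto (fun k : ℕ => E k ν) atTop (𝓝 (∫⁻ x : H, 0 ∂(ν : Measure H))) := by
      refine tendsto_lintegral_of_dominated_convergence (fun x => (‖x‖₊ : ℝ≥0∞) ^ (2:ℝ))
        (fun k => by fun_prop) (fun k => Eventually.of_forall fun x => tsub_le_self) hν
        (Eventually.of_forall fun x => ?_)
      obtain ⟨N, hN⟩ := exists_nat_ge (‖x‖₊ ^ 2)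
      refine tendsto_const_nhds.congr' ?_
      filter_upwards [eventually_ge_atTop N] with k hk
      refine (tsub_eq_zero_of_le ?_).symm
      simp only [ENNReal.rpow_ofNat]
      have : ‖x‖₊ ^ 2 ≤ (k : ℝ≥0) := hN.trans (by exact_mod_cast hk)
      exact_mod_cast this
    simpa using this
  rw [ENNReal.tendsto_nhds_zero]
  intro ε' hε'
  set ε := ε' / 9 with hεdef
  have hε : 0 < ε := ENNReal.div_pos hε'.ne' (by simp)
  obtain ⟨d, hd0, hd⟩ : ∃ d : ℝ≥0, 0 < d ∧ (d : ℝ≥0∞) ^ (2:ℝ) ≤ ε := by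
    have hmt : min ε 1 ≠ ∞ := ne_top_of_le_ne_top ENNReal.one_ne_top (min_le_right _ _)
    refine ⟨(min ε 1).toNNReal, ENNReal.toNNReal_pos (by simp [hε.ne']) hmt, ?_⟩
    rw [ENNReal.coe_toNNReal hmt, ENNReal.rpow_ofNat, sq]
    calc min ε 1 * min ε 1 ≤ ε * 1 := mul_le_mul' (min_le_left _ _) (min_le_right _ _)
      _ = ε := mul_one _
  obtain ⟨φ, hφ1, hφ2, hφd⟩ := exists_pou (H := H) (δ := (d : ℝ) / 4) (by positivity)
  obtain ⟨R, hR⟩ := ((hE0.eventually_lt_const hε)).exists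
  have hη : 0 < ε / (R : ℝ≥0∞) := ENNReal.div_pos hε.ne' (by simp)
  have hK : Tendsto (fun K => 1 - ∑ i ∈ Finset.range K, ∫⁻ x, φ i x ∂(ν : Measure H)) atTop
      (𝓝 0) := by
    have h1 : Tendsto (fun K => ∑ i ∈ Finset.range K, ∫⁻ x, φ i x ∂(ν : Measure H)) atTop
        (𝓝 (∫⁻ x, 1 ∂(ν : Measure H))) := by
      have : ∀ K, ∑ i ∈ Finset.range K, ∫⁻ x, φ i x ∂(ν : Measure H) =
          ∫⁻ x, ∑ i ∈ Finset.range K, (φ i x : ℝ≥0∞) ∂(ν : Measure H) := fun K => by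
        rw [lintegral_finsetSum _ (fun i _ => by fun_prop)]
      simp_rw [this]
      refine tendsto_lintegral_of_dominated_convergence (fun x => 1)
        (fun k => by fun_prop) (fun k => Eventually.of_forall fun x => ?_) (by simp)
        (Eventually.of_forall fun x => ?_)
      · have := hφ1 k x
        beta_reduce
        exact_mod_cast this
      · refine tendsto_const_nhds.congr' ?_
        filter_upwards [hφ2 x] with K hK
        exact_mod_cast hK.symm
    have h2 := ENNReal.Tendsto.sub (tendsto_const_nhds (x := (1:ℝ≥0∞))) h1
      (Or.inl ENNReal.one_ne_top)
    simpa using h2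
  obtain ⟨K, hK⟩ := (hK.eventually_lt_const hη).exists
  have hmass : Tendsto (fun n => 1 - ∑ i ∈ Finset.range K,
      min (∫⁻ x, φ i x ∂(μ n : Measure H)) (∫⁻ x, φ i x ∂(ν : Measure H))) atTop
      (𝓝 (1 - ∑ i ∈ Finset.range K, ∫⁻ x, φ i x ∂(ν : Measure H))) := by
    refine ENNReal.Tendsto.sub tendsto_const_nhds ?_ (Or.inl ENNReal.one_ne_top)
    refine tendsto_finsetSum _ fun i _ => ?_
    have := (hw (φ i)).min (tendsto_const_nhds (x := ∫⁻ x, φ i x ∂(ν : Measure H)))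
    simpa using this
  filter_upwards [hmass.eventually_lt_const hK, (hEt R).eventually_lt_const hR] with n hn1 hn2
  obtain ⟨α, β, hα, hβ, hαm, hβm, hle⟩ := coupling_bound (μ n : Measure H) (ν : Measure H) K
    (fun i => φ i) (fun i => (φ i).continuous.measurable) (hφ1 K) d (fun i x y hx hy => by
      have := hφd i x y hx hy
      rw [dist_eq_norm] at this
      rw [← NNReal.coe_le_coe, coe_nnnorm]
      linarith)
  have hmom2 : ∀ (γ ρ : Measure H), γ ≤ ρ → γ Set.univ < ε / (R : ℝ≥0∞) → E R ρ < ε →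
      ∫⁻ x, (‖x‖₊ : ℝ≥0∞) ^ (2:ℝ) ∂γ ≤ 2 * ε := by
    intro γ ρ h1 h2 h3
    calc ∫⁻ x, (‖x‖₊ : ℝ≥0∞) ^ (2:ℝ) ∂γ
        ≤ ∫⁻ x, ((R : ℝ≥0∞) + ((‖x‖₊ : ℝ≥0∞) ^ (2:ℝ) - R)) ∂γ :=
          lintegral_mono fun x => le_add_tsub
      _ = R * γ Set.univ + ∫⁻ x, ((‖x‖₊ : ℝ≥0∞) ^ (2:ℝ) - R) ∂γ := by
          rw [lintegral_add_left (by fun_prop), lintegral_const]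
      _ ≤ R * (ε / R) + E R ρ := by
          refine add_le_add (by gcongr) ?_
          exact lintegral_mono' h1 le_rfl
      _ ≤ ε + ε := add_le_add ENNReal.mul_div_le h3.le
      _ = 2 * ε := (two_mul ε).symm
  refine hle.trans ?_
  calc _ ≤ ε + (2 * (2 * ε) + 2 * (2 * ε)) := by
        gcongr
        · exact hmom2 α (μ n) hα (hαm ▸ hn1) hn2
        · exact hmom2 β ν hβ (hβm ▸ hn1) hR
    _ = 9 * ε := by ring
    _ ≤ ε' := ENNReal.mul_div_le

lemma sqnorm_integrable {H : Type*} [NormedAddCommGroup H] [MeasurableSpace H] [BorelSpace H]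
    [SecondCountableTopology H] (ρ : Measure H) (h : ∫⁻ x, (‖x‖₊ : ℝ≥0∞) ^ (2:ℝ) ∂ρ ≠ ∞) :
    Integrable (fun x => ‖x‖ ^ 2) ρ := by
  refine ⟨by fun_prop, ?_⟩
  refine lt_of_eq_of_lt ?_ h.lt_top
  refine lintegral_congr fun x => ?_
  simp [enorm_eq_nnnorm]

lemma sqnorm_lintegral {H : Type*} [NormedAddCommGroup H] [MeasurableSpace H] [BorelSpace H]
    [SecondCountableTopology H] (ρ : Measure H) (h : ∫⁻ x, (‖x‖₊ : ℝ≥0∞) ^ (2:ℝ) ∂ρ ≠ ∞) :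
    ∫⁻ x, (‖x‖₊ : ℝ≥0∞) ^ (2:ℝ) ∂ρ = ENNReal.ofReal (∫ x, ‖x‖ ^ 2 ∂ρ) := by
  rw [ofReal_integral_eq_lintegral_ofReal (sqnorm_integrable ρ h)
    (Eventually.of_forall fun x => by positivity)]
  refine lintegral_congr fun x => ?_
  rw [ENNReal.ofReal_pow (norm_nonneg x), ENNReal.rpow_ofNat, ofReal_norm, enorm_eq_nnnorm]

section
variable {H : Type*} [NormedAddCommGroup H] [InnerProductSpace ℝ H]
    [CompleteSpace H] [SecondCountableTopology H]
    [MeasurableSpace H] [BorelSpace H]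

lemma charFun_tendsto (μ : ℕ → Measure H) (μ' : Measure H)
    [∀ n, IsProbabilityMeasure (μ n)] [IsProbabilityMeasure μ']
    (hproj : ∀ u : H, ‖u‖ = 1 → ∀ g : BoundedContinuousFunction ℝ ℝ,
      Tendsto (fun n => ∫ t, g t ∂((μ n).map fun ξ => ⟪ξ, u⟫)) atTop
        (𝓝 (∫ t, g t ∂(μ'.map fun ξ => ⟪ξ, u⟫)))) (t : H) :
    Tendsto (fun n => charFun (μ n) t) atTop (𝓝 (charFun μ' t)) := by
  by_cases ht : t = 0
  · simp [ht]
  have hn : ‖t‖ ≠ 0 := norm_ne_zero_iff.mpr ht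
  set u : H := ‖t‖⁻¹ • t with hu
  have hu1 : ‖u‖ = 1 := by rw [hu, norm_smul, norm_inv, norm_norm, inv_mul_cancel₀ hn]
  have hm : Measurable fun ξ : H => ⟪ξ, u⟫ := by fun_prop
  have hP : ∀ (ρ : Measure H) [IsProbabilityMeasure ρ],
      IsProbabilityMeasure (ρ.map fun ξ => ⟪ξ, u⟫) :=
    fun ρ _ => Measure.isProbabilityMeasure_map hm.aemeasurable
  have hc : ∀ (ρ : Measure H), charFun (ρ.map fun ξ => ⟪ξ, u⟫) ‖t‖ = charFun ρ t := by
    intro ρ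
    rw [charFun_apply_real, charFun_apply, integral_map hm.aemeasurable (by fun_prop)]
    refine integral_congr_ae (Eventually.of_forall fun x => ?_)
    simp only [hu, inner_smul_right]
    congr 2
    rw [← Complex.ofReal_mul, mul_inv_cancel_left₀ hn]
  let P : ℕ → ProbabilityMeasure ℝ := fun n => ⟨(μ n).map fun ξ => ⟪ξ, u⟫, hP _⟩
  let P' : ProbabilityMeasure ℝ := ⟨μ'.map fun ξ => ⟪ξ, u⟫, hP _⟩
  have hw : Tendsto P atTop (𝓝 P') :=
    ProbabilityMeasure.tendsto_iff_forall_integral_tendsto.mpr (hproj u hu1)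
  have := ProbabilityMeasure.tendsto_iff_tendsto_charFun.mp hw ‖t‖
  have e : ∀ n, charFun (P n : Measure ℝ) ‖t‖ = charFun (μ n) t := fun n => hc _
  have e' : charFun (P' : Measure ℝ) ‖t‖ = charFun μ' t := hc _
  simpa only [e, e'] using this

lemma proj_tendsto (μ : ℕ → Measure H) (μ' : Measure H)
    [∀ n, IsProbabilityMeasure (μ n)] [IsProbabilityMeasure μ']
    (h : ∀ t : H, Tendsto (fun n => charFun (μ n) t) atTop (𝓝 (charFun μ' t)))
    (F : Submodule ℝ H) [FiniteDimensional ℝ F] (f : BoundedContinuousFunction H ℝ) :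
    Tendsto (fun n => ∫ x, f (F.starProjection x) ∂(μ n)) atTop
      (𝓝 (∫ x, f (F.starProjection x) ∂μ')) := by
  have hm : Measurable (F.orthogonalProjectionOnto : H → F) := by fun_prop
  have hP : ∀ (ρ : Measure H) [IsProbabilityMeasure ρ],
      IsProbabilityMeasure (ρ.map F.orthogonalProjectionOnto) :=
    fun ρ _ => Measure.isProbabilityMeasure_map hm.aemeasurable
  let P : ℕ → ProbabilityMeasure F := fun n => ⟨(μ n).map F.orthogonalProjectionOnto, hP _⟩
  let P' : ProbabilityMeasure F := ⟨μ'.map F.orthogonalProjectionOnto, hP _⟩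
  have hc : ∀ (ρ : Measure H) (t : F),
      charFun (ρ.map F.orthogonalProjectionOnto) t = charFun ρ (t : H) := by
    intro ρ t
    rw [charFun_apply, charFun_apply, integral_map hm.aemeasurable (by fun_prop)]
    refine integral_congr_ae (Eventually.of_forall fun x => ?_)
    simp
  have hw : Tendsto P atTop (𝓝 P') := by
    rw [ProbabilityMeasure.tendsto_iff_tendsto_charFun]
    intro t
    have e : ∀ n, charFun (P n : Measure F) t = charFun (μ n) t := fun n => hc _ _
    have e' : charFun (P' : Measure F) t = charFun μ' t := hc _ _
    simp_rw [e, e']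
    exact h t
  have := ProbabilityMeasure.tendsto_iff_forall_integral_tendsto.mp hw
    (f.compContinuous ⟨Subtype.val, continuous_subtype_val⟩)
  have hi : ∀ (ρ : Measure H), ∫ y, (f.compContinuous ⟨Subtype.val, continuous_subtype_val⟩ :
      BoundedContinuousFunction F ℝ) y ∂(ρ.map F.orthogonalProjectionOnto) =
      ∫ x, f (F.starProjection x) ∂ρ := by
    intro ρ
    rw [integral_map hm.aemeasurable (by fun_prop)]
    rfl
  have e : ∀ n, _ = _ := fun n => hi (μ n)
  have e' := hi μ'
  rw [← e']
  simp_rw [← e]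
  exact this

lemma exists_proj_seq (H : Type*) [NormedAddCommGroup H] [InnerProductSpace ℝ H]
    [CompleteSpace H] [SecondCountableTopology H] :
    ∃ F : ℕ → Submodule ℝ H, ∃ _ : ∀ k, FiniteDimensional ℝ (F k),
      ∀ x, Tendsto (fun k => (F k).starProjection x) atTop (𝓝 x) := by
  let z := TopologicalSpace.denseSeq H
  let F : ℕ → Submodule ℝ H := fun k => Submodule.span ℝ (z '' Set.Iio k)
  have hF : ∀ k, FiniteDimensional ℝ (F k) := fun k =>
    FiniteDimensional.span_of_finite ℝ ((Set.finite_Iio k).image z)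
  refine ⟨F, hF, fun x => Submodule.starProjection_tendsto_self F ?_ x ?_⟩
  · intro a b hab
    exact Submodule.span_mono (Set.image_mono (Set.Iio_subset_Iio hab))
  · have hd := TopologicalSpace.denseRange_denseSeq H
    intro y _
    have : y ∈ closure (Set.range z) := hd y
    refine closure_mono ?_ this
    rintro _ ⟨j, rfl⟩
    exact (le_iSup F (j + 1)) (Submodule.subset_span ⟨j, by simp, rfl⟩)

lemma proj_sq (F : Submodule ℝ H) [FiniteDimensional ℝ F] (x : H) :
    ‖x - F.starProjection x‖ ^ 2 = ‖x‖ ^ 2 - ‖F.starProjection x‖ ^ 2 := by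
  have := Submodule.norm_sq_eq_add_norm_sq_starProjection x F
  rw [Submodule.starProjection_orthogonal_val] at this
  linarith

lemma tail_small (μ : ℕ → Measure H) (μ' : Measure H)
    [∀ n, IsProbabilityMeasure (μ n)] [IsProbabilityMeasure μ']
    (h : ∀ t : H, Tendsto (fun n => charFun (μ n) t) atTop (𝓝 (charFun μ' t)))
    (hi : ∀ n, Integrable (fun x => ‖x‖ ^ 2) (μ n)) (hi' : Integrable (fun x => ‖x‖ ^ 2) μ')
    (hmom : Tendsto (fun n => ∫ ξ, ‖ξ‖ ^ 2 ∂(μ n)) atTop (𝓝 (∫ ξ, ‖ξ‖ ^ 2 ∂μ')))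
    (ε : ℝ) (hε : 0 < ε) :
    ∃ F : Submodule ℝ H, ∃ _ : FiniteDimensional ℝ F,
      (∀ᶠ n in atTop, ∫ x, ‖x - F.starProjection x‖ ^ 2 ∂(μ n) < ε) ∧
      ∫ x, ‖x - F.starProjection x‖ ^ 2 ∂μ' < ε := by
  obtain ⟨F, hF, hFt⟩ := exists_proj_seq H
  have hle : ∀ k x, ‖(F k).starProjection x‖ ^ 2 ≤ ‖x‖ ^ 2 := fun k x => by
    have := proj_sq (F k) x
    nlinarith [sq_nonneg ‖x - (F k).starProjection x‖]
  have ht : Tendsto (fun k : ℕ => ∫ x, min (‖(F k).starProjection x‖ ^ 2) (k : ℝ) ∂μ') atTop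
      (𝓝 (∫ x, ‖x‖ ^ 2 ∂μ')) := by
    refine tendsto_integral_of_dominated_convergence (fun x => ‖x‖ ^ 2)
      (fun k => by fun_prop) hi' (fun k => Eventually.of_forall fun x => ?_)
      (Eventually.of_forall fun x => ?_)
    · rw [Real.norm_of_nonneg (by positivity)]
      exact (min_le_left _ _).trans (hle k x)
    · have h1 : Tendsto (fun k => ‖(F k).starProjection x‖ ^ 2) atTop (𝓝 (‖x‖ ^ 2)) :=
        ((hFt x).norm).pow 2
      refine h1.congr' ?_
      obtain ⟨N, hN⟩ := exists_nat_ge (‖x‖ ^ 2)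
      filter_upwards [eventually_ge_atTop N] with k hk
      refine (min_eq_left ((hle k x).trans (hN.trans ?_))).symm
      exact_mod_cast hk
  obtain ⟨k, hk⟩ := (ht.eventually_const_lt (show ∫ x, ‖x‖ ^ 2 ∂μ' - ε < ∫ x, ‖x‖ ^ 2 ∂μ' by
    linarith)).exists
  have hconv : Tendsto (fun n => ∫ x, min (‖(F k).starProjection x‖ ^ 2) (k : ℝ) ∂(μ n)) atTop
      (𝓝 (∫ x, min (‖(F k).starProjection x‖ ^ 2) (k : ℝ) ∂μ')) :=
    proj_tendsto μ μ' h (F k) (BoundedContinuousFunction.ofNormedAddCommGroup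
      (fun y : H => min (‖y‖ ^ 2) (k : ℝ)) (by fun_prop) k (fun y => by
        rw [Real.norm_of_nonneg (by positivity)]; exact min_le_right _ _))
  have hbd : ∀ (ρ : Measure H) [IsProbabilityMeasure ρ], Integrable (fun x => ‖x‖ ^ 2) ρ →
      ∫ x, ‖x - (F k).starProjection x‖ ^ 2 ∂ρ ≤
        ∫ x, ‖x‖ ^ 2 ∂ρ - ∫ x, min (‖(F k).starProjection x‖ ^ 2) (k : ℝ) ∂ρ := by
    intro ρ _ hρ
    have hmi : Integrable (fun x => min (‖(F k).starProjection x‖ ^ 2) (k : ℝ)) ρ := by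
      refine hρ.mono (by fun_prop) (Eventually.of_forall fun x => ?_)
      rw [Real.norm_of_nonneg (by positivity), Real.norm_of_nonneg (by positivity)]
      exact (min_le_left _ _).trans (hle k x)
    rw [← integral_sub hρ hmi]
    refine integral_mono_of_nonneg (Eventually.of_forall fun x => by positivity) (hρ.sub hmi)
      (Eventually.of_forall fun x => ?_)
    simp only [proj_sq]
    linarith [min_le_left (‖(F k).starProjection x‖ ^ 2) (k : ℝ)]
  refine ⟨F k, hF k, ?_, ?_⟩
  · have hd := hmom.sub hconv
    filter_upwards [hd.eventually_lt_const (show _ < ε by linarith)] with n hn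
    exact (hbd (μ n) (hi n)).trans_lt hn
  · have := hbd μ' hi'
    linarith

lemma lip_bound (ρ : Measure H) [IsProbabilityMeasure ρ] (hρ : Integrable (fun x => ‖x‖ ^ 2) ρ)
    (F : Submodule ℝ H) [FiniteDimensional ℝ F] (f : BoundedContinuousFunction H ℝ) (L : ℝ≥0)
    (hf : LipschitzWith L f) (η : ℝ) (hη : 0 < η)
    (ht : ∫ x, ‖x - F.starProjection x‖ ^ 2 ∂ρ < η ^ 2) :
    |∫ x, f x ∂ρ - ∫ x, f (F.starProjection x) ∂ρ| ≤ L * (2 * η) := by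
  have hi1 : Integrable (fun x => f x) ρ := f.integrable ρ
  have hi2 : Integrable (fun x => f (F.starProjection x)) ρ :=
    (f.compContinuous ⟨F.starProjection, F.starProjection.continuous⟩).integrable ρ
  have hi3 : Integrable (fun x => ‖x - F.starProjection x‖ ^ 2) ρ := by
    refine hρ.mono (by fun_prop) (Eventually.of_forall fun x => ?_)
    rw [Real.norm_of_nonneg (by positivity), Real.norm_of_nonneg (by positivity), proj_sq]
    linarith [sq_nonneg ‖F.starProjection x‖]
  rw [← integral_sub hi1 hi2, ← Real.norm_eq_abs]
  calc _ ≤ ∫ x, L * (η + ‖x - F.starProjection x‖ ^ 2 / η) ∂ρ := by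
        refine norm_integral_le_of_norm_le
          (((integrable_const η).add (hi3.div_const η)).const_mul _)
          (Eventually.of_forall fun x => ?_)
        have h1 := hf.dist_le_mul x (F.starProjection x)
        rw [dist_eq_norm, dist_eq_norm] at h1
        refine h1.trans ?_
        gcongr
        set t := ‖x - F.starProjection x‖
        rw [← sub_nonneg]
        have : η + t ^ 2 / η - t = ((η - t / 2) ^ 2 + 3 / 4 * t ^ 2) / η := by
          field_simp; ring
        rw [this]; positivity
    _ = L * (η + (∫ x, ‖x - F.starProjection x‖ ^ 2 ∂ρ) / η) := by
        rw [integral_const_mul, integral_add (integrable_const η) (hi3.div_const η),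
          integral_div]
        simp
    _ ≤ L * (2 * η) := by
        gcongr
        have : (∫ x, ‖x - F.starProjection x‖ ^ 2 ∂ρ) / η ≤ η := by
          rw [div_le_iff₀ hη]; nlinarith
        linarith

lemma weak_tendsto (μ : ℕ → ProbabilityMeasure H) (μ' : ProbabilityMeasure H)
    (h : ∀ t : H, Tendsto (fun n => charFun (μ n : Measure H) t) atTop
      (𝓝 (charFun (μ' : Measure H) t)))
    (hi : ∀ n, Integrable (fun x => ‖x‖ ^ 2) (μ n : Measure H))
    (hi' : Integrable (fun x => ‖x‖ ^ 2) (μ' : Measure H))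
    (hmom : Tendsto (fun n => ∫ ξ, ‖ξ‖ ^ 2 ∂(μ n : Measure H)) atTop
      (𝓝 (∫ ξ, ‖ξ‖ ^ 2 ∂(μ' : Measure H)))) :
    Tendsto μ atTop (𝓝 μ') := by
  rw [tendsto_iff_forall_lipschitz_integral_tendsto]
  rintro f0 ⟨C, hC⟩ ⟨L, hL⟩
  let f : BoundedContinuousFunction H ℝ := BoundedContinuousFunction.mkOfBound
    ⟨f0, hL.continuous⟩ C hC
  have hfL : LipschitzWith L f := hL
  change Tendsto (fun n => ∫ x, f x ∂(μ n : Measure H)) atTop (𝓝 (∫ x, f x ∂(μ' : Measure H)))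
  rw [Metric.tendsto_atTop']
  intro ε hε
  set η : ℝ := ε / (8 * (L + 1)) with hη
  have hη0 : 0 < η := by positivity
  have hηL : L * (2 * η) ≤ ε / 4 := by
    have : η * (8 * (L + 1)) = ε := by rw [hη]; field_simp
    nlinarith [L.coe_nonneg]
  obtain ⟨F, hF, h1, h2⟩ := tail_small (fun n => (μ n : Measure H)) (μ' : Measure H) h hi hi' hmom
    (η ^ 2) (by positivity)
  have hp := proj_tendsto (fun n => (μ n : Measure H)) (μ' : Measure H) h F f
  have h3 := Metric.tendsto_nhds.mp hp (ε / 4) (by positivity)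
  obtain ⟨N, hN⟩ := eventually_atTop.mp (h1.and h3)
  refine ⟨N, fun n hn => ?_⟩
  obtain ⟨a, b⟩ := hN n hn.le
  have c1 := lip_bound (μ n : Measure H) (hi n) F f L hfL η hη0 a
  have c2 := lip_bound (μ' : Measure H) hi' F f L hfL η hη0 h2
  rw [Real.dist_eq, abs_lt] at *
  rw [abs_le] at c1 c2
  constructor <;> linarith [c1.1, c1.2, c2.1, c2.2, b.1, b.2]

end

/-- on a separable Hilbert space, if the second moments of `μ_n` converge to
that of `μ_∞` and for every unit vector `u` the pushforwards of `μ_n` under `ξ ↦ ⟪ξ, u⟫`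
converge weakly on `ℝ` to the pushforward of `μ_∞`, then `W₂(μ_n, μ_∞) → 0`. -/
theorem stmt11 {H : Type*} [NormedAddCommGroup H] [InnerProductSpace ℝ H]
    [CompleteSpace H] [TopologicalSpace.SeparableSpace H]
    [MeasurableSpace H] [BorelSpace H]
    (μ : ℕ → Measure H) (μ' : Measure H)
    [∀ n, IsProbabilityMeasure (μ n)] [IsProbabilityMeasure μ']
    (hμ : ∀ n, HasFiniteMoment 2 (μ n)) (hμ' : HasFiniteMoment 2 μ')
    (hmom : Tendsto (fun n => ∫ ξ, ‖ξ‖ ^ 2 ∂(μ n)) atTop (𝓝 (∫ ξ, ‖ξ‖ ^ 2 ∂μ')))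
    (hproj : ∀ u : H, ‖u‖ = 1 → ∀ g : BoundedContinuousFunction ℝ ℝ,
      Tendsto (fun n => ∫ t, g t ∂((μ n).map fun ξ => ⟪ξ, u⟫)) atTop
        (𝓝 (∫ t, g t ∂(μ'.map fun ξ => ⟪ξ, u⟫)))) :
    Tendsto (fun n => wassersteinDist 2 (μ n) μ') atTop (𝓝 0) := by
  haveI : SecondCountableTopology H := UniformSpace.secondCountable_of_separable H
  have hi : ∀ n, Integrable (fun x => ‖x‖ ^ 2) (μ n) := fun n => sqnorm_integrable _ (hμ n)
  have hi' : Integrable (fun x => ‖x‖ ^ 2) μ' := sqnorm_integrable _ hμ'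
  have hw := weak_tendsto (fun n => ⟨μ n, inferInstance⟩) ⟨μ', inferInstance⟩
    (charFun_tendsto μ μ' hproj) hi hi' hmom
  have hmom' : Tendsto (fun n => ∫⁻ x, (‖x‖₊ : ℝ≥0∞) ^ (2:ℝ) ∂(μ n)) atTop
      (𝓝 (∫⁻ x, (‖x‖₊ : ℝ≥0∞) ^ (2:ℝ) ∂μ')) := by
    rw [sqnorm_lintegral μ' hμ']
    simp_rw [fun n => sqnorm_lintegral (μ n) (hμ n)]
    exact ENNReal.tendsto_ofReal hmom
  have hc := cost_tendsto_of_weak _ _ hw hμ hμ' hmom'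
  have h1 := (ENNReal.tendsto_toReal ENNReal.zero_ne_top).comp hc
  have h2 := h1.rpow_const (p := (1 / 2 : ℝ)) (Or.inr (by norm_num))
  have e : (ENNReal.toReal 0) ^ (1 / 2 : ℝ) = 0 := by simp
  rw [e] at h2
  exact h2
end

section
/- (Static characterization in Hilbert space, N = 2, p = 2.) Let H be a separable Hilbert space and let μ, ν be Borel probability measures on H with finite second moments. If there exists a real constant C such that e_{2,2}(μ, (a, b)) = e_{2,2}(ν, (a, b)) + C for all (a, b) ∈ H², then μ = ν and C = 0. -/
open MeasureTheory
open scoped ENNReal NNReal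

lemma aux_memLp {H : Type*} [NormedAddCommGroup H] [InnerProductSpace ℝ H]
    [TopologicalSpace.SeparableSpace H] [MeasurableSpace H] [BorelSpace H]
    (μ : Measure H) (hμ : HasFiniteMoment 2 μ) : MemLp (fun x : H => x) 2 μ := by
  have : SecondCountableTopology H := UniformSpace.secondCountable_of_separable H
  refine ⟨measurable_id.aestronglyMeasurable, ?_⟩
  rw [eLpNorm_lt_top_iff_lintegral_rpow_enorm_lt_top (by simp) (by simp)]
  have h := lt_top_iff_ne_top.2 hμ
  simpa [enorm_eq_nnnorm] using h

lemma aux_int {H : Type*} [NormedAddCommGroup H] [InnerProductSpace ℝ H]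
    [MeasurableSpace H] [BorelSpace H]
    (μ : Measure H) [IsProbabilityMeasure μ] (h : MemLp (fun x : H => x) 2 μ) (a : H) :
    Integrable (fun x => ‖x - a‖ ^ 2) μ :=
  (h.sub (memLp_const a)).integrable_norm_pow (by simp)

lemma aux_quant {H : Type*} [NormedAddCommGroup H] [InnerProductSpace ℝ H]
    [TopologicalSpace.SeparableSpace H] [MeasurableSpace H] [BorelSpace H]
    (μ : Measure H) [IsProbabilityMeasure μ] (h : MemLp (fun x : H => x) 2 μ) (a b : H) :
    quantErr 2 2 μ ![a, b] = √(∫ x, min (‖x - a‖ ^ 2) (‖x - b‖ ^ 2) ∂μ) := by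
  have hi : Integrable (fun x => min (‖x - a‖ ^ 2) (‖x - b‖ ^ 2)) μ :=
    (aux_int μ h a).inf (aux_int μ h b)
  rw [integral_eq_lintegral_of_nonneg_ae (Filter.Eventually.of_forall fun x => by
    show (0:ℝ) ≤ _
    positivity) hi.1, Real.sqrt_eq_rpow, quantErr]
  congr 2
  refine lintegral_congr fun x => ?_
  have e : ∀ y : H, (‖y‖₊ : ℝ≥0∞) ^ (2:ℝ) = ENNReal.ofReal (‖y‖ ^ 2) := by
    intro y
    rw [ENNReal.rpow_two, ENNReal.ofReal_pow (norm_nonneg _), ofReal_norm, enorm_eq_nnnorm]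
  rw [ENNReal.ofReal_min, ← e, ← e]
  apply le_antisymm
  · exact le_min (iInf_le _ (0 : Fin 2)) (iInf_le _ (1 : Fin 2))
  · refine le_iInf fun i => ?_
    fin_cases i
    · exact min_le_left _ _
    · exact min_le_right _ _

/-- Call prices determine the law. -/
lemma aux_call (P Q : Measure ℝ) [IsProbabilityMeasure P] [IsProbabilityMeasure Q]
    (hP : Integrable (fun x => x) P) (hQ : Integrable (fun x => x) Q)
    (h : ∀ s : ℝ, ∫ x, max (x - s) 0 ∂P = ∫ x, max (x - s) 0 ∂Q) : P = Q := by
  have key : ∀ (ρ : Measure ℝ) [IsProbabilityMeasure ρ], Integrable (fun x => x) ρ → ∀ s : ℝ,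
      Filter.Tendsto (fun n : ℕ => ((n:ℝ) + 1) *
        ((∫ x, max (x - s) 0 ∂ρ) - ∫ x, max (x - (s + 1 / ((n:ℝ) + 1))) 0 ∂ρ))
        Filter.atTop (nhds (ρ.real (Set.Ioi s))) := by
    intro ρ _ hR s
    have hint : ∀ s : ℝ, Integrable (fun x => max (x - s) 0) ρ := fun s =>
      (hR.sub (integrable_const s)).pos_part
    have e : ∀ n : ℕ, ((n:ℝ) + 1) *
        ((∫ x, max (x - s) 0 ∂ρ) - ∫ x, max (x - (s + 1 / ((n:ℝ) + 1))) 0 ∂ρ)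
        = ∫ x, ((n:ℝ) + 1) * (max (x - s) 0 - max (x - (s + 1 / ((n:ℝ) + 1))) 0) ∂ρ := by
      intro n
      rw [integral_const_mul, integral_sub (hint _) (hint _)]
    simp_rw [e]
    rw [← integral_indicator_one measurableSet_Ioi]
    refine tendsto_integral_of_dominated_convergence (fun _ => 1) (fun n => ?_)
      (integrable_const _) (fun n => ?_) ?_
    · exact (((hint _).sub (hint _)).const_mul _).1
    · refine Filter.Eventually.of_forall fun x => ?_
      have hn : (0:ℝ) < (n:ℝ) + 1 := by positivity
      have h1 : ((n:ℝ) + 1) * (1 / ((n:ℝ) + 1)) = 1 := by field_simp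
      have h0 : 0 < 1 / ((n:ℝ) + 1) := by positivity
      rw [Real.norm_eq_abs, abs_le]
      have l : 0 ≤ max (x - s) 0 - max (x - (s + 1 / ((n:ℝ) + 1))) 0 := by grind
      have u : max (x - s) 0 - max (x - (s + 1 / ((n:ℝ) + 1))) 0 ≤ 1 / ((n:ℝ) + 1) := by grind
      constructor
      · nlinarith
      · nlinarith
    · refine Filter.Eventually.of_forall fun x => ?_
      by_cases hx : s < x
      · have : (Set.Ioi s).indicator (1 : ℝ → ℝ) x = 1 := by simp [hx]
        rw [this]
        refine tendsto_const_nhds.congr' ?_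
        have := (tendsto_one_div_add_atTop_nhds_zero_nat (𝕜 := ℝ)).eventually_lt_const (sub_pos.2 hx)
        filter_upwards [this] with n hn
        have hn' : (0:ℝ) < (n:ℝ) + 1 := by positivity
        rw [max_eq_left (by linarith), max_eq_left (by linarith)]
        field_simp
        ring
      · have : (Set.Ioi s).indicator (1 : ℝ → ℝ) x = 0 := by simp [hx]
        rw [this]
        refine tendsto_const_nhds.congr fun n => ?_
        have h0 : 0 < 1 / ((n:ℝ) + 1) := by positivity
        rw [max_eq_right (by linarith), max_eq_right (by linarith)]
        simp
  refine Measure.ext_of_Iic _ _ fun s => ?_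
  have h1 := key P hP s
  simp_rw [h] at h1
  have h2 := tendsto_nhds_unique h1 (key Q hQ s)
  rw [← Set.compl_Ioi, measure_compl measurableSet_Ioi (measure_ne_top _ _),
    measure_compl measurableSet_Ioi (measure_ne_top _ _), measure_univ, measure_univ]
  rw [Measure.real, Measure.real, ENNReal.toReal_eq_toReal_iff' (measure_ne_top _ _) (measure_ne_top _ _)] at h2
  rw [h2]

lemma aux_main {H : Type*} [NormedAddCommGroup H] [InnerProductSpace ℝ H]
    [CompleteSpace H] [TopologicalSpace.SeparableSpace H]
    [MeasurableSpace H] [BorelSpace H]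
    (μ ν : Measure H) [IsProbabilityMeasure μ] [IsProbabilityMeasure ν]
    (hμ : MemLp (fun x : H => x) 2 μ) (hν : MemLp (fun x : H => x) 2 ν)
    (hF : ∀ a b : H, ∫ x, min (‖x - a‖ ^ 2) (‖x - b‖ ^ 2) ∂μ
      = ∫ x, min (‖x - a‖ ^ 2) (‖x - b‖ ^ 2) ∂ν) : μ = ν := by
  have : SecondCountableTopology H := UniformSpace.secondCountable_of_separable H
  have hcall : ∀ a b : H, ∫ x, max (‖x - a‖ ^ 2 - ‖x - b‖ ^ 2) 0 ∂μ
      = ∫ x, max (‖x - a‖ ^ 2 - ‖x - b‖ ^ 2) 0 ∂ν := by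
    intro a b
    have e : ∀ x : H, max (‖x - a‖ ^ 2 - ‖x - b‖ ^ 2) 0
        = ‖x - a‖ ^ 2 - min (‖x - a‖ ^ 2) (‖x - b‖ ^ 2) := by intro x; grind
    simp_rw [e]
    have iμ : Integrable (fun x => min (‖x - a‖ ^ 2) (‖x - b‖ ^ 2)) μ :=
      (aux_int μ hμ a).inf (aux_int μ hμ b)
    have iν : Integrable (fun x => min (‖x - a‖ ^ 2) (‖x - b‖ ^ 2)) ν :=
      (aux_int ν hν a).inf (aux_int ν hν b)
    rw [integral_sub (aux_int μ hμ a) iμ, integral_sub (aux_int ν hν a) iν]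
    have h1 := hF a a
    simp only [min_self] at h1
    rw [h1, hF a b]
  have hmap : ∀ v : H, v ≠ 0 → μ.map (fun x => inner ℝ x v) = ν.map (fun x => inner ℝ x v) := by
    intro v hv
    have hm : Measurable (fun x : H => inner ℝ x v) := by fun_prop
    have := Measure.isProbabilityMeasure_map (μ := μ) hm.aemeasurable
    have := Measure.isProbabilityMeasure_map (μ := ν) hm.aemeasurable
    have hi : ∀ (ρ : Measure H) [IsProbabilityMeasure ρ], MemLp (fun x : H => x) 2 ρ →
        Integrable (fun x => x) (ρ.map (fun x => inner ℝ x v)) := by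
      intro ρ _ hR
      rw [integrable_map_measure (by fun_prop) hm.aemeasurable]
      exact (hR.integrable (by norm_num)).inner_const v
    refine aux_call _ _ (hi μ hμ) (hi ν hν) fun s => ?_
    rw [integral_map hm.aemeasurable (by fun_prop), integral_map hm.aemeasurable (by fun_prop)]
    have hv2 : ‖v‖ ^ 2 ≠ 0 := by simpa using hv
    have h := hcall ((s / ‖v‖ ^ 2 - 1 / 2) • v) ((s / ‖v‖ ^ 2 + 1 / 2) • v)
    have e : ∀ x : H, max (‖x - (s / ‖v‖ ^ 2 - 1 / 2) • v‖ ^ 2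
        - ‖x - (s / ‖v‖ ^ 2 + 1 / 2) • v‖ ^ 2) 0 = 2 * max (inner ℝ x v - s) 0 := by
      intro x
      rw [mul_max_of_nonneg _ _ (by norm_num), mul_zero]
      congr 1
      rw [norm_sub_sq_real, norm_sub_sq_real, inner_smul_right, inner_smul_right, norm_smul,
        norm_smul, mul_pow, mul_pow, Real.norm_eq_abs, Real.norm_eq_abs, sq_abs, sq_abs]
      field_simp
      ring
    simp_rw [e, integral_const_mul] at h
    linarith
  refine Measure.ext_of_charFun ?_
  funext v
  by_cases hv : v = 0
  · subst hv; simp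
  have hm : Measurable (fun x : H => inner ℝ x v) := by fun_prop
  have h : ∀ ρ : Measure H, charFun ρ v
      = ∫ y : ℝ, Complex.exp (y * Complex.I) ∂(ρ.map (fun x => inner ℝ x v)) := by
    intro ρ
    rw [integral_map hm.aemeasurable (by fun_prop), charFun_apply]
  rw [h, h, hmap v hv]

lemma aux_C {H : Type*} [NormedAddCommGroup H] [InnerProductSpace ℝ H]
    [CompleteSpace H] [TopologicalSpace.SeparableSpace H]
    [MeasurableSpace H] [BorelSpace H]
    (μ ν : Measure H) [IsProbabilityMeasure μ] [IsProbabilityMeasure ν]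
    (hμ : MemLp (fun x : H => x) 2 μ) (hν : MemLp (fun x : H => x) 2 ν) (C : ℝ)
    (hC : ∀ a : H, √(∫ x, ‖x - a‖ ^ 2 ∂μ) = √(∫ x, ‖x - a‖ ^ 2 ∂ν) + C) : C = 0 := by
  by_cases hH : Subsingleton H
  · have h := hC 0
    have e : ∀ x : H, x = 0 := fun x => Subsingleton.elim _ _
    simp [e] at h
    exact h.symm
  rw [not_subsingleton_iff_nontrivial] at hH
  obtain ⟨u, hu⟩ := exists_norm_eq H (zero_le_one' ℝ)
  have q : ∀ (ρ : Measure H) [IsProbabilityMeasure ρ], MemLp (fun x : H => x) 2 ρ → ∃ A B : ℝ,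
      ∀ t : ℝ, ∫ x, ‖x - t • u‖ ^ 2 ∂ρ = A + B * t + t ^ 2 := by
    intro ρ _ hR
    have i1 : Integrable (fun x => ‖x‖ ^ 2) ρ := by simpa using aux_int ρ hR 0
    have i2 : Integrable (fun x => inner ℝ x u) ρ := (hR.integrable (by norm_num)).inner_const u
    refine ⟨∫ x, ‖x‖ ^ 2 ∂ρ, -2 * ∫ x, inner ℝ x u ∂ρ, fun t => ?_⟩
    have e : ∀ x : H, ‖x - t • u‖ ^ 2 = ‖x‖ ^ 2 + (-2 * t) * inner ℝ x u + t ^ 2 := by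
      intro x
      rw [norm_sub_sq_real, inner_smul_right, norm_smul, hu, mul_one, Real.norm_eq_abs, sq_abs]
      ring
    simp_rw [e]
    have i3 : Integrable (fun x => ‖x‖ ^ 2 + (-2 * t) * inner ℝ x u) ρ :=
      i1.add (i2.const_mul _)
    rw [integral_add i3 (integrable_const _),
      integral_add i1 (i2.const_mul _), integral_const_mul, integral_const]
    simp
    ring
  obtain ⟨A, B, h1⟩ := q μ hμ
  obtain ⟨A', B', h2⟩ := q ν hν
  by_contra hne
  have key : ∀ t : ℝ, ∃ h : ℝ, 0 ≤ h ∧ h ^ 2 = A' + B' * t + t ^ 2 ∧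
      2 * C * h = (A - A' - C ^ 2) + (B - B') * t := by
    intro t
    refine ⟨√(∫ x, ‖x - t • u‖ ^ 2 ∂ν), Real.sqrt_nonneg _, ?_, ?_⟩
    · rw [Real.sq_sqrt (integral_nonneg fun x => by positivity), h2]
    · have p1 := Real.sq_sqrt (integral_nonneg (μ := μ) (f := fun x => ‖x - t • u‖ ^ 2) fun x => by positivity)
      have p2 := Real.sq_sqrt (integral_nonneg (μ := ν) (f := fun x => ‖x - t • u‖ ^ 2) fun x => by positivity)
      rw [hC] at p1
      rw [h1] at p1
      nth_rewrite 2 [h2] at p2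
      linarith
  generalize A - A' - C ^ 2 = α at key
  generalize B - B' = β at key
  have hβ : β = 0 := by
    by_contra hb
    obtain ⟨x, hx, -, hx2⟩ := key ((1 - α) / β)
    obtain ⟨y, hy, -, hy2⟩ := key ((-1 - α) / β)
    rw [mul_div_cancel₀ _ hb] at hx2 hy2
    rcases lt_or_gt_of_ne hne with h | h <;> nlinarith
  subst hβ
  have k2 : ∀ t : ℝ, 4 * C ^ 2 * (A' + B' * t + t ^ 2) = α ^ 2 := by
    intro t
    obtain ⟨x, hx, hx1, hx2⟩ := key t
    rw [← hx1]
    have : (2 * C * x) ^ 2 = α ^ 2 := by rw [hx2]; ring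
    linarith
  have a0 := k2 0
  have a1 := k2 1
  have a2 := k2 (-1)
  have : C ^ 2 = 0 := by linarith
  exact hne (by simpa using this)

/-- static characterization in Hilbert space, `N = 2`, `p = 2`: if two Borel
probability measures on a separable Hilbert space with finite second moments satisfy
`e_{2,2}(μ, (a,b)) = e_{2,2}(ν, (a,b)) + C` for all `(a, b) ∈ H²` and a real constant `C`,
then `μ = ν` and `C = 0`. -/
theorem stmt12 {H : Type*} [NormedAddCommGroup H] [InnerProductSpace ℝ H]
    [CompleteSpace H] [TopologicalSpace.SeparableSpace H]
    [MeasurableSpace H] [BorelSpace H]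
    (μ ν : Measure H) [IsProbabilityMeasure μ] [IsProbabilityMeasure ν]
    (hμ : HasFiniteMoment 2 μ) (hν : HasFiniteMoment 2 ν)
    (C : ℝ) (hC : ∀ a b : H, quantErr 2 2 μ ![a, b] = quantErr 2 2 ν ![a, b] + C) :
    μ = ν ∧ C = 0 := by
  have mμ := aux_memLp μ hμ
  have mν := aux_memLp ν hν
  simp_rw [aux_quant μ mμ, aux_quant ν mν] at hC
  have hC0 : C = 0 := aux_C μ ν mμ mν C fun a => by simpa using hC a a
  refine ⟨aux_main μ ν mμ mν fun a b => ?_, hC0⟩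
  have h := hC a b
  rw [hC0, add_zero] at h
  exact (Real.sqrt_inj (integral_nonneg fun x => by positivity)
    (integral_nonneg fun x => by positivity)).1 h
end
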